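/- arXiv:1310.3546 — 2 statements merged into one kernel-verified Lean document; each statement's English description precedes it below -/
import Mathlib

section
/- For an s,t-graded count: the multiplicity of the irreducible S_n-representation σ_λ in S_t(E_n) ⊗ Λ_s(E_n), where E_n = ℂ^n is the permutation representation, equals t^{n(λ)} Π_{(i,j)∈λ} (1 + s·t^{c(i,j)}) / Π_{(i,j)∈λ} (1 - t^{h(i,j)}), where c(i,j)=j-i is the content and h(i,j) the hook length of box (i,j), and n(λ)=Σ(i-1)λ_i. -/
set_option maxHeartbeats 1000000
set_option synthInstance.maxHeartbeats 400000

/-!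
STATEMENT 6: the graded multiplicity of the irreducible `S_n`-representation `σ_λ`
in `S_t(E_n) ⊗ Λ_s(E_n)`, where `E_n = ℂ^n` is the permutation representation —
i.e. `g_λ(t,s) = (1/n!) Σ_w χ_λ(w) det(1+s·w)/det(1-t·w)` — equals
`t^{n(λ)} Π_{(i,j)∈λ} (1 + s·t^{c(i,j)}) / Π_{(i,j)∈λ} (1 - t^{h(i,j)})`.
-/

open scoped BigOperators Classical

noncomputable section

/-- the multiset of fiber sizes of `f : Fin n → ℕ` (over the image of `f`). -/
def fiberSizes (n : ℕ) (f : Fin n → ℕ) : Multiset ℕ :=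
  (Finset.univ.image f).val.map (fun j => (Finset.univ.filter (fun i => f i = j)).card)

/-- the Young subgroup of `S_n` preserving the fibers of `f`. -/
def youngSubgroup (n : ℕ) (f : Fin n → ℕ) : Subgroup (Equiv.Perm (Fin n)) where
  carrier := {w | ∀ i, f (w i) = f i}
  one_mem' := by intro i; rfl
  mul_mem' := by
    intro a b ha hb i
    simpa [Equiv.Perm.mul_apply] using (ha (b i)).trans (hb i)
  inv_mem' := by
    intro a ha i
    simpa using (ha (a⁻¹ i)).symm

/-- the function on `G` induced from `φ` on the subgroup `H`. -/
def indCF {G : Type} [Group G] [Fintype G] (H : Subgroup G) (φ : G → ℚ) : G → ℚ :=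
  fun w => ((Nat.card H : ℚ))⁻¹ *
    ∑ g : G, if g⁻¹ * w * g ∈ H then φ (g⁻¹ * w * g) else 0

/-- the standard character pairing on `S_n` (characters here are real valued). -/
def pairS (n : ℕ) (a b : Equiv.Perm (Fin n) → ℚ) : ℚ :=
  ((n.factorial : ℚ))⁻¹ * ∑ w : Equiv.Perm (Fin n), a w * b w

/-- the multiset of parts of the conjugate (transposed) partition. -/
def conjParts (n : ℕ) (m : Multiset ℕ) : Multiset ℕ :=
  ((Finset.range n).val.map (fun j => Multiset.card (m.filter (fun a => j < a)))).filter
    (fun a => 0 < a)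

/-- `χ` is (the character of) the irreducible representation `σ_λ` of `S_n` attached to
the partition with parts `lam` and conjugate-partition parts `lamT`: it is a genuine
character, has norm one (so is irreducible), and is a common constituent of
`Ind_{S_λ} 1` and `Ind_{S_{λᵗ}} sgn` — which characterizes `σ_λ`. -/
def IsIrrCharOf (n : ℕ) (lam lamT : Multiset ℕ) (χ : Equiv.Perm (Fin n) → ℤ) : Prop :=
  (∃ V : FDRep ℂ (Equiv.Perm (Fin n)), ∀ g, V.character g = (χ g : ℂ)) ∧
  pairS n (fun w => (χ w : ℚ)) (fun w => (χ w : ℚ)) = 1 ∧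
  (∀ f : Fin n → ℕ, fiberSizes n f = lam →
      pairS n (fun w => (χ w : ℚ)) (indCF (youngSubgroup n f) (fun _ => 1)) ≠ 0) ∧
  (∀ f : Fin n → ℕ, fiberSizes n f = lamT →
      pairS n (fun w => (χ w : ℚ))
        (indCF (youngSubgroup n f) (fun w => ((Equiv.Perm.sign w : ℤ) : ℚ))) ≠ 0)

/-- the field `ℚ(t,s)` of rational functions in two variables. -/
abbrev F : Type := RatFunc (RatFunc ℚ)

/-- the variable `t`. -/
def tt : F := RatFunc.C (RatFunc.X : RatFunc ℚ)

/-- the variable `s`. -/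
def ss : F := RatFunc.X

/-- the permutation matrix of `w` on the permutation representation `E_n`. -/
def permM (n : ℕ) (w : Equiv.Perm (Fin n)) : Matrix (Fin n) (Fin n) F :=
  Matrix.of fun i j => if w j = i then 1 else 0

/-- the hook length `h(i,j)` of the box `c = (i,j)` of `μ` (0-indexed). -/
def hookLen (μ : YoungDiagram) (c : ℕ × ℕ) : ℕ :=
  μ.rowLen c.1 + μ.colLen c.2 - c.1 - c.2 - 1

/-- the content `c(i,j) = j - i` of a box (0-indexed). -/
def content (c : ℕ × ℕ) : ℤ := (c.2 : ℤ) - (c.1 : ℤ)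

/-- `n(λ) = Σ_i (i-1) λ_i = Σ_{(i,j)∈λ} i` (0-indexed rows). -/
def nInv (μ : YoungDiagram) : ℕ := ∑ c ∈ μ.cells, c.1

def PP {A : Type} [Fintype A] {R : Type} [CommRing R] {n : ℕ} (w : Equiv.Perm (Fin n))
    (z : A → R) : R :=
  ∑ f : Fin n → A, if (∀ i, f (w i) = f i) then ∏ i, z (f i) else 0

theorem det_transitive {α : Type} [Fintype α] [DecidableEq α] {R : Type} [CommRing R]
    (w : Equiv.Perm α) (i0 : α) (hw : ∀ j, w.SameCycle i0 j) (a : R) :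
    Matrix.det (Matrix.of fun i j => (if i = j then (1:R) else 0) - (if w j = i then a else 0))
      = 1 - a ^ Fintype.card α := by
  by_cases h1 : Subsingleton α
  · have : Unique α := ⟨⟨i0⟩, fun j => Subsingleton.elim _ _⟩
    rw [Matrix.det_unique]
    have : Fintype.card α = 1 := Fintype.card_unique
    simp [Subsingleton.elim (w default) default]
  · have hall : ∀ i j, w.SameCycle i j := fun i j => (hw i).symm.trans (hw j)
    have hne : ∀ i, w i ≠ i := by
      intro i hi
      apply h1
      constructor
      have : ∀ j, j = i := by
        intro j
        obtain ⟨k, hk⟩ := hall i j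
        rw [← hk]
        exact Equiv.Perm.zpow_apply_eq_self_of_apply_eq_self hi k
      intro x y; rw [this x, this y]
    have hcyc : w.IsCycle := ⟨i0, hne i0, fun j _ => hw j⟩
    have hw1 : (1 : Equiv.Perm α) ≠ w := by
      intro h; apply hne i0; rw [← h]; rfl
    rw [Matrix.det_apply']
    rw [← Finset.sum_subset (Finset.subset_univ {1, w})]
    · rw [Finset.sum_pair hw1]
      have hsupp : w.support = Finset.univ := by
        ext i; simp [hne i]
      have hs := hcyc.sign
      rw [hsupp, Finset.card_univ] at hs
      have e1 : ∀ i, (if w i = i then a else 0) = 0 := fun i => if_neg (hne i)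
      have e2 : ∀ i, (if w i = i then (1:R) else 0) = 0 := fun i => if_neg (hne i)
      simp [hs, e1, e2, Finset.card_univ]
      rw [neg_pow a, ← mul_assoc, ← pow_add, ← two_mul, pow_mul]
      simp [sub_eq_add_neg]
    · intro σ _ hσ
      simp only [Finset.mem_insert, Finset.mem_singleton, not_or] at hσ
      by_contra hcon
      have hprod : ∀ i, σ i = i ∨ σ i = w i := by
        intro i
        by_contra hc
        push Not at hc
        apply hcon
        rw [Finset.prod_eq_zero (Finset.mem_univ i), mul_zero]
        simp [hc.1, Ne.symm hc.2]
      obtain ⟨i, hi⟩ : ∃ i, σ i ≠ i := by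
        by_contra hc
        push Not at hc
        exact hσ.1 (Equiv.ext hc)
      apply hσ.2
      have key : ∀ k : ℕ, σ ((w ^ k) i) = w ((w ^ k) i) := by
        intro k
        induction k with
        | zero => simpa using (hprod i).resolve_left hi
        | succ k ih =>
          refine (hprod _).resolve_left ?_
          intro h
          rw [pow_succ', Equiv.Perm.mul_apply, ← ih] at h
          have := σ.injective h
          rw [ih] at this
          exact hne _ this
      ext j
      obtain ⟨k, _, hk⟩ := (hall i j).exists_pow_eq'
      rw [← hk, key]

abbrev Orb {n : ℕ} (w : Equiv.Perm (Fin n)) : Type := Quotient (Equiv.Perm.SameCycle.setoid w)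

def osz {n : ℕ} (w : Equiv.Perm (Fin n)) (o : Orb w) : ℕ :=
  Fintype.card {i : Fin n // (Quotient.mk _ i : Orb w) = o}

theorem det_orb {n : ℕ} {R : Type} [CommRing R] (w : Equiv.Perm (Fin n)) (a : R) :
    Matrix.det (Matrix.of fun i j => (if i = j then (1:R) else 0) - (if w j = i then a else 0))
      = ∏ o : Orb w, (1 - a ^ osz w o) := by
  let e := Fintype.equivFin (Orb w)
  let b : Fin n → Fin (Fintype.card (Orb w)) := fun i => e (Quotient.mk _ i)
  have hb : ∀ i j, b i = b j ↔ w.SameCycle i j := by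
    intro i j
    simp only [b, e.apply_eq_iff_eq]
    exact Quotient.eq
  rw [Matrix.BlockTriangular.det_fintype (b := b)]
  · rw [← e.symm.prod_comp]
    refine Finset.prod_congr rfl fun k _ => ?_
    obtain ⟨i0, hi0⟩ := Quotient.exists_rep (e.symm k)
    have hbi0 : b i0 = k := by simp only [b]; rw [hi0]; simp
    have hiff : ∀ x, b x = k ↔ b (w x) = k := by
      intro x
      have : b (w x) = b x := (hb _ _).2 (Equiv.Perm.sameCycle_apply_left.2 (Equiv.Perm.SameCycle.refl _ _))
      rw [this]
    have := det_transitive (R := R) (w.subtypePerm (p := fun i => b i = k) (fun x => (hiff x).symm)) ⟨i0, hbi0⟩ ?_ a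
    · have hc : Fintype.card {i // b i = k} = osz w (e.symm k) := by
        unfold osz
        apply Fintype.card_congr
        apply Equiv.subtypeEquivRight
        intro x
        simp only [b]
        rw [Equiv.eq_symm_apply]
      rw [← hc, ← this]
      congr 1
      ext i j
      simp [Matrix.toSquareBlock_def, Subtype.ext_iff]
    · rintro ⟨j, hj⟩
      have : w.SameCycle i0 j := (hb _ _).1 (hbi0.trans hj.symm)
      obtain ⟨k', hk'⟩ := this
      refine ⟨k', ?_⟩
      apply Subtype.ext
      rw [Equiv.Perm.subtypePerm_zpow]
      exact hk'
  · intro i j hij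
    have hne : b i ≠ b j := ne_of_gt hij
    have h1 : i ≠ j := fun h => hne (by rw [h])
    have h2 : w j ≠ i := by
      intro h; apply hne; rw [hb, ← h]
      exact Equiv.Perm.sameCycle_apply_left.2 (Equiv.Perm.SameCycle.refl _ _)
    simp [h1, h2]

theorem PP_orb {A : Type} [Fintype A] {R : Type} [CommRing R] {n : ℕ} (w : Equiv.Perm (Fin n))
    (z : A → R) : PP w z = ∏ o : Orb w, ∑ k, z k ^ osz w o := by
  rw [Finset.prod_univ_sum]
  unfold PP
  rw [← Finset.sum_filter]
  rw [Fintype.piFinset_univ]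
  have hfix : ∀ f : Fin n → A, (∀ i, f (w i) = f i) → ∀ i j, w.SameCycle i j → f i = f j := by
    intro f hf i j hij
    obtain ⟨k, hk0, hk⟩ := hij.exists_pow_eq'
    rw [← hk]
    clear hk hk0
    induction k with
    | zero => simp
    | succ k ih => rw [pow_succ', Equiv.Perm.mul_apply, hf]; exact ih
  refine Finset.sum_bij' (fun f hf => fun o => Quotient.lift f (hfix f (by simpa using hf)) o)
    (fun p _ => fun i => p (Quotient.mk _ i)) ?_ ?_ ?_ ?_ ?_
  · intro f hf; simp
  · intro p _
    simp only [Finset.mem_filter, Finset.mem_univ, true_and]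
    intro i
    congr 1
    apply Quotient.sound
    exact Equiv.Perm.sameCycle_apply_left.2 (Equiv.Perm.SameCycle.refl _ _)
  · intro f hf; rfl
  · intro p _
    funext o
    induction o using Quotient.inductionOn
    rfl
  · intro f hf
    rw [← Finset.prod_fiberwise Finset.univ (fun i => (Quotient.mk _ i : Orb w))]
    refine Finset.prod_congr rfl fun o _ => ?_
    have : osz w o = (Finset.univ.filter fun i => (Quotient.mk _ i : Orb w) = o).card := by
      unfold osz; rw [Fintype.card_subtype]
    rw [this, ← Finset.prod_const]
    refine Finset.prod_congr rfl fun i hi => ?_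
    simp only [Finset.mem_filter, Finset.mem_univ, true_and] at hi
    rw [← hi]; rfl

theorem PP_det {R : Type} [CommRing R] {n : ℕ} (w : Equiv.Perm (Fin n)) (N : ℕ) (q : R) :
    PP w (fun k : Fin N => q ^ (k : ℕ)) * ∏ o : Orb w, (1 - q ^ osz w o)
      = ∏ o : Orb w, (1 - (q ^ N) ^ osz w o) := by
  rw [PP_orb, ← Finset.prod_mul_distrib]
  refine Finset.prod_congr rfl fun o _ => ?_
  rw [Fin.sum_univ_eq_sum_range (fun k => (q ^ k) ^ osz w o)]
  have := geom_sum_mul_neg (q ^ osz w o) N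
  rw [← pow_mul, mul_comm N, pow_mul, ← this]
  congr 1
  refine Finset.sum_congr rfl fun k _ => ?_
  rw [← pow_mul, ← pow_mul, mul_comm]

def cont {A : Type} {n : ℕ} (f : Fin n → A) : A →₀ ℕ := ∑ i, Finsupp.single (f i) 1

theorem cont_apply {A : Type} {n : ℕ} (f : Fin n → A) (a : A) :
    cont f a = Fintype.card {i // f i = a} := by
  unfold cont
  rw [Finsupp.finsetSum_apply, Fintype.card_subtype, Finset.card_filter]
  refine Finset.sum_congr rfl fun i _ => ?_
  rw [Finsupp.single_apply]

theorem prod_cont {A : Type} [Fintype A] {n : ℕ} {R : Type} [CommRing R] (f : Fin n → A)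
    (z : A → R) : ∏ i, z (f i) = ∏ a, z a ^ cont f a := by
  rw [← Finset.prod_fiberwise Finset.univ f]
  refine Finset.prod_congr rfl fun a _ => ?_
  rw [cont_apply, Fintype.card_subtype, ← Finset.prod_const]
  refine Finset.prod_congr rfl fun i hi => ?_
  rw [(Finset.mem_filter.1 hi).2]

theorem sum_cont {A : Type} [Fintype A] {n : ℕ} (f : Fin n → A) : ∑ a, cont f a = n := by
  simp only [cont_apply]
  rw [← Fintype.card_sigma]
  rw [Fintype.card_congr (Equiv.sigmaFiberEquiv f), Fintype.card_fin]

def stabc {A : Type} {n : ℕ} (f : Fin n → A) : ℕ :=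
  (Finset.univ.filter fun w : Equiv.Perm (Fin n) => ∀ i, f (w i) = f i).card

theorem burn {A : Type} [Fintype A] {n : ℕ} (m : A →₀ ℕ) (hm : ∑ a, m a = n) :
    ∑ f ∈ Finset.univ.filter (fun f : Fin n → A => cont f = m), stabc f = n.factorial := by
  have hc : Fintype.card (Fin n) = Fintype.card (Σ a, Fin (m a)) := by
    simp [hm]
  let e := Fintype.equivOfCardEq hc
  let f0 : Fin n → A := fun i => (e i).1
  have hf0 : cont f0 = m := by
    ext a
    rw [cont_apply]
    have : {i // f0 i = a} ≃ Fin (m a) :=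
      (e.subtypeEquiv (p := fun i => f0 i = a) (q := fun x => x.1 = a) (fun i => Iff.rfl)).trans
        (Equiv.sigmaSubtype a)
    rw [Fintype.card_congr this, Fintype.card_fin]
  have hG : n.factorial = (Finset.univ : Finset (Equiv.Perm (Fin n))).card := by
    rw [Finset.card_univ, Fintype.card_perm, Fintype.card_fin]
  rw [hG, Finset.card_eq_sum_card_fiberwise (f := fun g : Equiv.Perm (Fin n) => f0 ∘ g)
    (t := Finset.univ.filter (fun f : Fin n → A => cont f = m))]
  · refine Finset.sum_congr rfl fun f hf => ?_
    have hf : cont f = m := by simpa using hf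
    have hex : ∃ g0 : Equiv.Perm (Fin n), f0 ∘ g0 = f := by
      have : ∀ a, Nonempty ({i // f i = a} ≃ {i // f0 i = a}) := by
        intro a
        refine ⟨Fintype.equivOfCardEq ?_⟩
        rw [← cont_apply, ← cont_apply, hf, hf0]
      let E := fun a => (this a).some
      refine ⟨Equiv.ofFiberEquiv E, ?_⟩
      funext i
      exact Equiv.ofFiberEquiv_map E i
    obtain ⟨g0, hg0⟩ := hex
    unfold stabc
    refine Finset.card_bij' (fun w _ => g0 * w) (fun w _ => g0⁻¹ * w) ?_ ?_ ?_ ?_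
    · intro w hw
      simp only [Finset.mem_filter, Finset.mem_univ, true_and] at hw ⊢
      funext i
      rw [← hw i, ← hg0]; rfl
    · intro w hw
      simp only [Finset.mem_filter, Finset.mem_univ, true_and] at hw ⊢
      intro i
      conv_rhs => rw [← hw]
      rw [← hg0]; simp
    · intro w _; simp
    · intro w _; simp
  · intro g _
    simp only [Finset.coe_filter, Finset.mem_univ, true_and, Set.mem_ofPred_eq]
    ext a
    rw [← hf0, cont_apply, cont_apply]
    exact Fintype.card_congr (g.subtypeEquiv (fun i => Iff.rfl))

def geo {S : Type} [CommRing S] (z : S) : PowerSeries S := PowerSeries.mk fun k => z ^ k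

theorem sum_PP {A : Type} [Fintype A] {R : Type} [CommRing R] (n : ℕ) (z : A → R) :
    ∑ w : Equiv.Perm (Fin n), PP w z
      = (n.factorial : R) * PowerSeries.coeff n (∏ a, geo (z a)) := by
  unfold PP
  rw [Finset.sum_comm]
  have h1 : ∀ f : Fin n → A, (∑ w : Equiv.Perm (Fin n),
      if (∀ i, f (w i) = f i) then ∏ i, z (f i) else 0) = stabc f * ∏ i, z (f i) := by
    intro f
    rw [← Finset.sum_filter, Finset.sum_const, nsmul_eq_mul]; rfl
  rw [Finset.sum_congr rfl fun f _ => h1 f]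
  rw [PowerSeries.coeff_prod, Finset.mul_sum]
  rw [← Finset.sum_fiberwise_of_maps_to (g := cont)
    (t := Finset.finsuppAntidiag (Finset.univ : Finset A) n)]
  · refine Finset.sum_congr rfl fun m hm => ?_
    have hm' : ∑ a, m a = n := by
      rw [Finset.mem_finsuppAntidiag] at hm
      exact hm.1
    rw [← burn m hm', Nat.cast_sum, Finset.sum_mul]
    refine Finset.sum_congr rfl fun f hf => ?_
    have hf : cont f = m := by simpa using hf
    rw [prod_cont, hf]
    simp [geo]
  · intro f _
    rw [Finset.mem_finsuppAntidiag]
    exact ⟨sum_cont f, Finset.subset_univ _⟩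

theorem geo_mul {S : Type} [CommRing S] (z : S) :
    geo z * (1 - PowerSeries.C z * PowerSeries.X) = 1 := by
  ext n
  rw [mul_sub, mul_one, map_sub, mul_left_comm, PowerSeries.coeff_C_mul]
  cases n with
  | zero => simp [geo]
  | succ k => simp [geo, PowerSeries.coeff_succ_mul_X, pow_succ', PowerSeries.coeff_one]

def Epoly {S : Type} [CommRing S] {N : ℕ} (y : Fin N → S) (j : Fin N) : Polynomial S :=
  ∏ j' ∈ Finset.univ.erase j, (1 - Polynomial.C (y j') * Polynomial.X)

theorem Epoly_deg {S : Type} [CommRing S] {N : ℕ} (y : Fin N → S) (j : Fin N) :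
    (Epoly y j).natDegree < N := by
  unfold Epoly
  refine lt_of_le_of_lt (Polynomial.natDegree_prod_le _ _) ?_
  refine lt_of_le_of_lt (Finset.sum_le_card_nsmul _ _ 1 ?_) ?_
  · intro i _
    compute_degree
  · simp [Finset.card_erase_of_mem]
    exact j.pos

theorem geo_E {S : Type} [CommRing S] {N : ℕ} (y : Fin N → S) (j : Fin N) (u : S) :
    geo (u * y j) = (∏ j', geo (u * y j')) *
      ∑ k : Fin N, (PowerSeries.C u * PowerSeries.X) ^ (k : ℕ) * PowerSeries.C ((Epoly y j).coeff k) := by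
  have h : Polynomial.aeval (PowerSeries.C u * PowerSeries.X : PowerSeries S) (Epoly y j)
      = ∑ k : Fin N, (PowerSeries.C u * PowerSeries.X) ^ (k : ℕ) * PowerSeries.C ((Epoly y j).coeff k) := by
    rw [Polynomial.aeval_eq_sum_range' (Epoly_deg y j),
      ← Fin.sum_univ_eq_sum_range (fun i => (Epoly y j).coeff i • (PowerSeries.C u * PowerSeries.X : PowerSeries S) ^ i)]
    refine Finset.sum_congr rfl fun k _ => ?_
    rw [PowerSeries.smul_eq_C_mul, mul_comm]
  rw [← h, Epoly, map_prod, ← Finset.mul_prod_erase Finset.univ _ (Finset.mem_univ j), mul_assoc,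
    ← Finset.prod_mul_distrib]
  rw [Finset.prod_eq_one, mul_one]
  intro j' _
  rw [← geo_mul (u * y j')]
  congr 1
  simp only [map_sub, map_one, map_mul, Polynomial.aeval_C, Polynomial.aeval_X]
  rw [show (algebraMap S (PowerSeries S)) (y j') = PowerSeries.C (y j') from rfl]
  ring

def Cmat {S : Type} [CommRing S] {N : ℕ} (y : Fin N → S) : Matrix (Fin N) (Fin N) S :=
  Matrix.of fun k j => (Epoly y j).coeff k

theorem det_Cmat {S : Type} [CommRing S] {N : ℕ} (y : Fin N → S) :
    (Cmat y).det = (Matrix.vandermonde y).det := by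
  let H : PowerSeries S := ∏ j', geo (1 * y j')
  let Lm : Matrix (Fin N) (Fin N) S := Matrix.of fun m k =>
    if k ≤ m then PowerSeries.coeff ((m : ℕ) - k) H else 0
  have h1 : (Matrix.vandermonde y).transpose = Lm * Cmat y := by
    ext m j
    rw [Matrix.transpose_apply, Matrix.vandermonde_apply, Matrix.mul_apply]
    have := congrArg (PowerSeries.coeff (m : ℕ)) (geo_E y j 1)
    rw [one_mul] at this
    have e : PowerSeries.coeff (m : ℕ) (geo (y j)) = y j ^ (m : ℕ) := by simp [geo]
    rw [e] at this
    rw [this, Finset.mul_sum, map_sum]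
    refine Finset.sum_congr rfl fun k _ => ?_
    rw [map_one, one_mul, ← mul_assoc, PowerSeries.coeff_mul_C, PowerSeries.coeff_mul_X_pow']
    simp only [Lm, Cmat, Matrix.of_apply, Fin.le_def]
    rfl
  have h2 : Lm.det = 1 := by
    rw [Matrix.det_of_isLowerTriangular]
    · refine Finset.prod_eq_one fun i _ => ?_
      simp [Lm, H, geo, map_prod, ← PowerSeries.coeff_zero_eq_constantCoeff_apply]
    · intro i j hij
      have : ¬ j ≤ i := not_le.2 hij
      simp [Lm, this]
  rw [← Matrix.det_transpose (Matrix.vandermonde y), h1, Matrix.det_mul, h2, one_mul]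

theorem cauchy_geo {S : Type} [CommRing S] {N : ℕ} (x y : Fin N → S) :
    (Matrix.of fun i j => geo (x i * y j)).det
      = (∏ i, ∏ j, geo (x i * y j)) * ((PowerSeries.X) ^ (∑ k : Fin N, (k : ℕ)) *
        PowerSeries.C ((Matrix.vandermonde x).det * (Matrix.vandermonde y).det)) := by
  have h : (Matrix.of fun i j => geo (x i * y j)) = Matrix.of fun i j => (∏ j', geo (x i * y j')) *
      ((Matrix.of fun (i k : Fin N) => (PowerSeries.X : PowerSeries S) ^ (k : ℕ) *
        ((Matrix.vandermonde x).map (PowerSeries.C)) i k) * (Cmat y).map (PowerSeries.C)) i j := by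
    refine Matrix.ext fun i j => ?_
    rw [Matrix.of_apply, Matrix.of_apply, geo_E, Matrix.mul_apply]
    apply congrArg
    refine Finset.sum_congr rfl fun (k : Fin N) _ => ?_
    simp only [Matrix.of_apply, Matrix.map_apply, Matrix.vandermonde_apply, Cmat, map_pow]
    ring
  rw [h, Matrix.det_mul_column, Matrix.det_mul, Matrix.det_mul_row, ← det_Cmat y, map_mul,
    RingHom.map_det, RingHom.map_det, Finset.prod_pow_eq_pow_sum]
  simp only [RingHom.mapMatrix_apply]
  ring

theorem PP_mul {A B : Type} [Fintype A] [Fintype B] {R : Type} [CommRing R] {n : ℕ}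
    (w : Equiv.Perm (Fin n)) (x : A → R) (y : B → R) :
    PP w x * PP w y = PP w (fun p : A × B => x p.1 * y p.2) := by
  rw [PP_orb, PP_orb, PP_orb, ← Finset.prod_mul_distrib]
  refine Finset.prod_congr rfl fun o _ => ?_
  rw [Finset.sum_mul_sum, Fintype.sum_prod_type]
  simp only [mul_pow]

theorem PP_map {A : Type} [Fintype A] {R R' : Type} [CommRing R] [CommRing R'] {n : ℕ}
    (w : Equiv.Perm (Fin n)) (x : A → R) (φ : R →+* R') :
    φ (PP w x) = PP w (fun a => φ (x a)) := by
  rw [PP_orb, PP_orb]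
  simp

theorem vdm_map {R R' : Type} [CommRing R] [CommRing R'] {N : ℕ} (x : Fin N → R) (φ : R →+* R') :
    φ (Matrix.vandermonde x).det = (Matrix.vandermonde fun i => φ (x i)).det := by
  rw [RingHom.map_det]
  congr 1
  ext i j
  simp [Matrix.vandermonde_apply]

/-- the virtual character -/
def vch {n N : ℕ} (l : Fin N →₀ ℕ) (w : Equiv.Perm (Fin n)) : ℤ :=
  MvPolynomial.coeff l ((Matrix.vandermonde (MvPolynomial.X : Fin N → MvPolynomial (Fin N) ℤ)).det
    * PP w (MvPolynomial.X : Fin N → MvPolynomial (Fin N) ℤ))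

theorem vch_cast {n N : ℕ} (l : Fin N →₀ ℕ) (w : Equiv.Perm (Fin n)) {R : Type} [CommRing R] :
    (vch l w : R) =
  MvPolynomial.coeff l ((Matrix.vandermonde (MvPolynomial.X : Fin N → MvPolynomial (Fin N) R)).det
    * PP w (MvPolynomial.X : Fin N → MvPolynomial (Fin N) R)) := by
  unfold vch
  rw [← eq_intCast (Int.castRingHom R), ← MvPolynomial.coeff_map, map_mul, PP_map, vdm_map]
  simp

theorem cauchy_coeff {n N : ℕ} {R : Type} [CommRing R] (y : Fin N → R) (l : Fin N →₀ ℕ)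
    (hl : ∑ i, l i = n + ∑ k : Fin N, (k : ℕ)) :
    ∑ w : Equiv.Perm (Fin n), (vch l w : R) * ((Matrix.vandermonde y).det * PP w y)
      = (n.factorial : R) * (Matrix.of fun i j => y i ^ l j).det := by
  let S := MvPolynomial (Fin N) R
  let x : Fin N → S := MvPolynomial.X
  let y' : Fin N → S := fun j => MvPolynomial.C (y j)
  have h1 : ∑ w : Equiv.Perm (Fin n), (vch l w : R) * ((Matrix.vandermonde y).det * PP w y)
     = MvPolynomial.coeff l ((Matrix.vandermonde x).det * (Matrix.vandermonde y').det *
        ∑ w : Equiv.Perm (Fin n), PP w (fun p : Fin N × Fin N => x p.1 * y' p.2)) := by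
    rw [Finset.mul_sum, MvPolynomial.coeff_sum]
    refine Finset.sum_congr rfl fun w _ => ?_
    rw [← PP_mul, vch_cast, mul_comm, ← MvPolynomial.coeff_C_mul, map_mul, PP_map, vdm_map]
    congr 1
    simp only [x, y']
    ring
  have h2 : (Matrix.vandermonde x).det * (Matrix.vandermonde y').det *
      PowerSeries.coeff n (∏ p : Fin N × Fin N, geo (x p.1 * y' p.2))
      = PowerSeries.coeff (n + ∑ k : Fin N, (k : ℕ)) (Matrix.of fun i j => geo (x i * y' j)).det := by
    rw [cauchy_geo, ← mul_assoc, PowerSeries.coeff_mul_C, PowerSeries.coeff_mul_X_pow,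
      Fintype.prod_prod_type, mul_comm]
  rw [h1, sum_PP, mul_left_comm, h2, ← map_natCast MvPolynomial.C, MvPolynomial.coeff_C_mul]
  congr 1
  rw [← Matrix.det_transpose, Matrix.det_apply', Matrix.det_apply', map_sum, MvPolynomial.coeff_sum]
  refine Finset.sum_congr rfl fun σ _ => ?_
  have e : ∀ (z : PowerSeries S) (m : ℕ) (k : ℤ), PowerSeries.coeff m ((k : PowerSeries S) * z)
      = (k : S) * PowerSeries.coeff m z := by
    intro z m k
    rw [← map_intCast (PowerSeries.C (R := S)), PowerSeries.coeff_C_mul]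
  rw [e, ← map_intCast (MvPolynomial.C (R := R) (σ := Fin N)), MvPolynomial.coeff_C_mul]
  congr 1
  simp only [Matrix.transpose_apply, Matrix.of_apply]
  rw [PowerSeries.coeff_prod, MvPolynomial.coeff_sum]
  have key : ∀ m : Fin N →₀ ℕ, ∏ i, PowerSeries.coeff (m i) (geo (x i * y' (σ i)))
      = MvPolynomial.monomial m (∏ i, y (σ i) ^ m i) := by
    intro m
    rw [MvPolynomial.monomial_eq, Finsupp.prod_fintype _ _ (by simp), map_prod, ← Finset.prod_mul_distrib]
    refine Finset.prod_congr rfl fun i _ => ?_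
    simp only [geo, PowerSeries.coeff_mk, x, y', mul_pow, ← map_pow]
    rw [mul_comm]
  simp only [key, MvPolynomial.coeff_monomial]
  rw [Finset.sum_eq_single l]
  · rw [if_pos rfl]
  · intro m _ hm
    rw [if_neg hm]
  · intro h
    exfalso; apply h
    rw [Finset.mem_finsuppAntidiag]
    exact ⟨hl, Finset.subset_univ _⟩

theorem vch_norm {n N : ℕ} (l : Fin N →₀ ℕ)
    (hl : ∑ i, l i = n + ∑ k : Fin N, (k : ℕ)) (hinj : Function.Injective l) :
    ∑ w : Equiv.Perm (Fin n), vch l w * vch l w = n.factorial := by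
  have h := congrArg (MvPolynomial.coeff l)
    (cauchy_coeff (n := n) (MvPolynomial.X : Fin N → MvPolynomial (Fin N) ℤ) l hl)
  rw [MvPolynomial.coeff_sum] at h
  have e : ∀ (k : ℤ) (p : MvPolynomial (Fin N) ℤ), MvPolynomial.coeff l ((k : MvPolynomial (Fin N) ℤ) * p)
      = k * MvPolynomial.coeff l p := by
    intro k p
    rw [← MvPolynomial.coeff_C_mul]; simp
  simp only [e] at h
  rw [← Int.cast_natCast, e] at h
  have h3 : MvPolynomial.coeff l (Matrix.of fun i j => (MvPolynomial.X i : MvPolynomial (Fin N) ℤ) ^ l j).det = 1 := by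
    rw [Matrix.det_apply', MvPolynomial.coeff_sum]
    have h4 : ∀ σ : Equiv.Perm (Fin N), MvPolynomial.coeff l (((Equiv.Perm.sign σ : ℤ) : MvPolynomial (Fin N) ℤ) *
        ∏ i, (Matrix.of fun i j => (MvPolynomial.X i : MvPolynomial (Fin N) ℤ) ^ l j) (σ i) i)
        = if σ = 1 then 1 else 0 := by
      intro σ
      rw [e]
      simp only [Matrix.of_apply, MvPolynomial.X_pow_eq_monomial]
      rw [← MvPolynomial.monomial_sum_one, MvPolynomial.coeff_monomial]
      have h5 : (∑ i, Finsupp.single (σ i) (l i) = l) ↔ σ = 1 := by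
        constructor
        · intro h
          ext i
          have := DFunLike.congr_fun h (σ i)
          rw [Finsupp.finsetSum_apply, Finset.sum_eq_single i] at this
          · simp at this
            rw [← hinj this]; simp
          · intro b _ hb
            rw [Finsupp.single_apply, if_neg]
            exact fun h => hb (σ.injective h)
          · simp
        · rintro rfl
          exact Finsupp.univ_sum_single l
      by_cases hσ : σ = 1
      · rw [if_pos (h5.2 hσ), if_pos hσ, hσ]; simp
      · rw [if_neg (fun h => hσ (h5.1 h)), if_neg hσ]; simp
    rw [Finset.sum_congr rfl fun σ _ => h4 σ]
    simp
  rw [h3, mul_one] at h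
  exact h

def lrow (μ : YoungDiagram) (N : ℕ) (j : Fin N) : ℕ := μ.rowLen (N - 1 - j)

def lfun (μ : YoungDiagram) (N : ℕ) (j : Fin N) : ℕ := j + lrow μ N j

theorem lfun_lt (μ : YoungDiagram) (N : ℕ) {i j : Fin N} (h : i < j) : lfun μ N i < lfun μ N j := by
  unfold lfun lrow
  have h' : (i : ℕ) < j := h
  have := μ.rowLen_anti (N - 1 - j) (N - 1 - i) (by omega)
  omega

theorem cells_eq (μ : YoungDiagram) (N : ℕ) (hN : μ.colLen 0 ≤ N) :
    μ.cells = ((Finset.univ : Finset (Fin N)).sigma fun j => Finset.range (lrow μ N j)).image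
      (fun p => (N - 1 - (p.1 : ℕ), p.2)) := by
  ext ⟨a, b⟩
  simp only [YoungDiagram.mem_cells, Finset.mem_image, Finset.mem_sigma, Finset.mem_univ, true_and,
    Finset.mem_range, Prod.mk.injEq, Sigma.exists, lrow]
  constructor
  · intro h
    have h0 : (a, 0) ∈ μ := μ.up_left_mem le_rfl (Nat.zero_le _) h
    rw [YoungDiagram.mem_iff_lt_colLen] at h0
    refine ⟨⟨N - 1 - a, by omega⟩, b, ?_, ?_, rfl⟩
    · rw [YoungDiagram.mem_iff_lt_rowLen] at h
      have : N - 1 - (N - 1 - a) = a := by omega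
      simpa [this] using h
    · dsimp only; omega
  · rintro ⟨j, b', h, h1, rfl⟩
    rw [YoungDiagram.mem_iff_lt_rowLen, ← h1]
    exact h

theorem cells_inj (N : ℕ) (s : Set (Σ _ : Fin N, ℕ)) :
    Set.InjOn (fun p : (Σ _ : Fin N, ℕ) => (N - 1 - (p.1 : ℕ), p.2)) s := by
  rintro ⟨⟨a, ha⟩, b⟩ _ ⟨⟨c, hc⟩, d⟩ _ h
  simp only [Prod.mk.injEq] at h
  obtain ⟨h1, h2⟩ := h
  have : a = c := by omega
  subst this; subst h2; rfl

theorem cells_prod {M : Type} [CommMonoid M] (μ : YoungDiagram) (N : ℕ) (hN : μ.colLen 0 ≤ N)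
    (g : ℕ × ℕ → M) :
    ∏ c ∈ μ.cells, g c = ∏ j : Fin N, ∏ k ∈ Finset.range (lrow μ N j), g (N - 1 - j, k) := by
  rw [cells_eq μ N hN, Finset.prod_image (cells_inj N _), Finset.prod_sigma]

theorem cells_sum {M : Type} [AddCommMonoid M] (μ : YoungDiagram) (N : ℕ) (hN : μ.colLen 0 ≤ N)
    (g : ℕ × ℕ → M) :
    ∑ c ∈ μ.cells, g c = ∑ j : Fin N, ∑ k ∈ Finset.range (lrow μ N j), g (N - 1 - j, k) := by
  rw [cells_eq μ N hN, Finset.sum_image (cells_inj N _), Finset.sum_sigma]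

theorem hook_row {R : Type} [CommRing R] (q : R) (μ : YoungDiagram) (N : ℕ) (hN : μ.colLen 0 ≤ N)
    (j : Fin N) :
    (∏ k ∈ Finset.range (lrow μ N j), (1 - q ^ hookLen μ (N - 1 - j, k))) *
      ∏ i ∈ Finset.Iio j, (1 - q ^ (lfun μ N j - lfun μ N i))
      = ∏ m ∈ Finset.Icc 1 (lfun μ N j), (1 - q ^ m) := by
  have hj := j.2
  set r : ℕ := N - 1 - j with hr
  have hmem : ∀ k ∈ Finset.range (lrow μ N j), r < μ.colLen k ∧ k < μ.rowLen r ∧ μ.colLen k ≤ N := by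
    intro k hk
    rw [Finset.mem_range, lrow, ← hr] at hk
    refine ⟨?_, hk, le_trans (μ.colLen_anti 0 k (Nat.zero_le _)) hN⟩
    rw [← YoungDiagram.mem_iff_lt_colLen, YoungDiagram.mem_iff_lt_rowLen]; exact hk
  have inj1 : Set.InjOn (fun k => hookLen μ (r, k)) (Finset.range (lrow μ N j)) := by
    have aux : ∀ k ∈ Finset.range (lrow μ N j), ∀ k' ∈ Finset.range (lrow μ N j), k < k' →
        hookLen μ (r, k') < hookLen μ (r, k) := by
      intro k hk k' hk' hlt
      have h1 := hmem k hk
      have h2 := hmem k' hk'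
      have h3 := μ.colLen_anti k k' hlt.le
      simp only [hookLen]
      omega
    intro k hk k' hk' h
    by_contra hne
    rcases lt_or_gt_of_ne hne with h1 | h1
    · exact absurd h (aux k hk k' hk' h1).ne'
    · exact absurd h (aux k' hk' k hk h1).ne
  have inj2 : Set.InjOn (fun i => lfun μ N j - lfun μ N i) (Finset.Iio j : Finset (Fin N)) := by
    intro i hi i' hi' h
    have hi1 := lfun_lt μ N (Finset.mem_Iio.1 hi)
    have hi2 := lfun_lt μ N (Finset.mem_Iio.1 hi')
    simp only at h
    rcases lt_trichotomy i i' with h1 | h1 | h1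
    · have := lfun_lt μ N h1; omega
    · exact h1
    · have := lfun_lt μ N h1; omega
  have disj : Disjoint ((Finset.range (lrow μ N j)).image (fun k => hookLen μ (r, k)))
      ((Finset.Iio j).image (fun i => lfun μ N j - lfun μ N i)) := by
    rw [Finset.disjoint_left]
    intro m hm hm'
    rw [Finset.mem_image] at hm hm'
    obtain ⟨k, hk, rfl⟩ := hm
    obtain ⟨i, hi, h⟩ := hm'
    have h1 := hmem k hk
    have h2 := lfun_lt μ N (Finset.mem_Iio.1 hi)
    have h3 : (i : ℕ) < j := Fin.lt_def.1 (Finset.mem_Iio.1 hi)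
    have h4 : (N - 1 - i, k) ∈ μ ↔ k < μ.rowLen (N - 1 - i) := YoungDiagram.mem_iff_lt_rowLen
    have h5 : (N - 1 - i, k) ∈ μ ↔ N - 1 - i < μ.colLen k := YoungDiagram.mem_iff_lt_colLen
    simp only [hookLen, lfun, lrow, ← hr] at h h2
    by_cases h6 : (N - 1 - (i : ℕ), k) ∈ μ
    · have := h4.1 h6
      have := h5.1 h6
      omega
    · have := mt h4.2 h6
      have := mt h5.2 h6
      omega
  have hset : Finset.Icc 1 (lfun μ N j) = ((Finset.range (lrow μ N j)).image (fun k => hookLen μ (r, k)))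
      ∪ ((Finset.Iio j).image (fun i => lfun μ N j - lfun μ N i)) := by
    symm
    apply Finset.eq_of_subset_of_card_le
    · intro m hm
      rw [Finset.mem_union, Finset.mem_image, Finset.mem_image] at hm
      rw [Finset.mem_Icc]
      rcases hm with ⟨k, hk, rfl⟩ | ⟨i, hi, rfl⟩
      · have h1 := hmem k hk
        simp only [hookLen, lfun, lrow, ← hr]
        omega
      · have h2 := lfun_lt μ N (Finset.mem_Iio.1 hi)
        omega
    · rw [Finset.card_union_of_disjoint disj, Finset.card_image_of_injOn inj1,
        Finset.card_image_of_injOn inj2]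
      simp [lfun]
      omega
  rw [hset, Finset.prod_union disj, Finset.prod_image inj1, Finset.prod_image inj2]

theorem content_row {R : Type} [CommRing R] (q : R) (μ : YoungDiagram) (N : ℕ) (j : Fin N) :
    (∏ k ∈ Finset.range (lrow μ N j), (1 - q ^ (N + k - (N - 1 - j)))) *
      ∏ i ∈ Finset.Iio j, (1 - q ^ ((j : ℕ) - i))
      = ∏ m ∈ Finset.Icc 1 (lfun μ N j), (1 - q ^ m) := by
  have hj := j.2
  have h1 : ∏ i ∈ Finset.Iio j, (1 - q ^ ((j : ℕ) - i)) = ∏ m ∈ Finset.range j, (1 - q ^ (m + 1)) := by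
    rw [← Finset.prod_range_reflect]
    refine Finset.prod_bij (fun i _ => (i : ℕ)) ?_ ?_ ?_ ?_
    · intro i hi; have : (i:ℕ) < j := Fin.lt_def.1 (Finset.mem_Iio.1 hi)
      simpa using this
    · intro i _ i' _ h; exact Fin.ext h
    · intro b hb
      rw [Finset.mem_range] at hb
      exact ⟨⟨b, by omega⟩, by simpa [Fin.lt_def] using hb, rfl⟩
    · intro i hi
      have : (i:ℕ) < j := Fin.lt_def.1 (Finset.mem_Iio.1 hi)
      congr 2; omega
  have h2 : ∏ m ∈ Finset.Icc 1 (lfun μ N j), (1 - q ^ m)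
      = ∏ m ∈ Finset.range (lfun μ N j), (1 - q ^ (m + 1)) := by
    rw [Finset.range_eq_Ico, Finset.prod_Ico_add' (fun m => 1 - q ^ m) 0 (lfun μ N j) 1]
    rfl
  rw [h1, h2, lfun, Finset.prod_range_add, mul_comm]
  congr 1
  refine Finset.prod_congr rfl fun k _ => ?_
  congr 2; omega

theorem vdm_q {R : Type} [CommRing R] (q : R) {N : ℕ} (l : Fin N → ℕ) (hl : ∀ i j, i < j → l i < l j) :
    (Matrix.vandermonde fun i => q ^ l i).det
      = (∏ j : Fin N, ∏ _i ∈ Finset.Iio j, (-1 : R)) * q ^ (∑ i : Fin N, (N - 1 - i) * l i) *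
        ∏ j, ∏ i ∈ Finset.Iio j, (1 - q ^ (l j - l i)) := by
  rw [Matrix.det_vandermonde]
  rw [Finset.prod_comm' (t' := Finset.univ) (s' := fun j => Finset.Iio j) (by simp)]
  have h1 : q ^ (∑ i : Fin N, (N - 1 - i) * l i) = ∏ j : Fin N, ∏ i ∈ Finset.Iio j, q ^ l i := by
    rw [Finset.prod_comm' (t' := Finset.univ) (s' := fun i => Finset.Ioi i) (by simp)]
    rw [← Finset.prod_pow_eq_pow_sum]
    refine Finset.prod_congr rfl fun i _ => ?_
    rw [Finset.prod_const, Fin.card_Ioi, ← pow_mul, mul_comm]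
  rw [h1, ← Finset.prod_mul_distrib, ← Finset.prod_mul_distrib]
  refine Finset.prod_congr rfl fun j _ => ?_
  rw [← Finset.prod_mul_distrib, ← Finset.prod_mul_distrib]
  refine Finset.prod_congr rfl fun i hi => ?_
  have := hl i j (Finset.mem_Iio.1 hi)
  have h2 : q ^ l j = q ^ l i * q ^ (l j - l i) := by rw [← pow_add]; congr 1; omega
  rw [h2]; ring

theorem hook_id {R : Type} [CommRing R] (q : R) (μ : YoungDiagram) (N : ℕ) (hN : μ.colLen 0 ≤ N) :
    (∏ c ∈ μ.cells, (1 - q ^ hookLen μ c)) * (Matrix.vandermonde fun i => q ^ lfun μ N i).det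
      = q ^ nInv μ * (∏ c ∈ μ.cells, (1 - q ^ (N + c.2 - c.1))) *
        (Matrix.vandermonde fun i : Fin N => q ^ (i : ℕ)).det := by
  rw [vdm_q q (lfun μ N) (fun i j h => lfun_lt μ N h), vdm_q q (fun i : Fin N => (i : ℕ)) (fun i j h => h)]
  rw [cells_prod μ N hN, cells_prod μ N hN]
  have h1 : ∑ i : Fin N, (N - 1 - i) * lfun μ N i = nInv μ + ∑ i : Fin N, (N - 1 - i) * (i : ℕ) := by
    rw [nInv, cells_sum μ N hN, ← Finset.sum_add_distrib]
    refine Finset.sum_congr rfl fun i _ => ?_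
    simp [lfun]; ring
  have h2 := Finset.prod_congr (rfl : (Finset.univ : Finset (Fin N)) = _) fun j _ =>
    (hook_row q μ N hN j).trans (content_row q μ N j).symm
  rw [Finset.prod_mul_distrib, Finset.prod_mul_distrib] at h2
  rw [h1, pow_add]
  linear_combination (∏ j : Fin N, ∏ _i ∈ Finset.Iio j, (-1 : R)) * q ^ nInv μ * q ^ (∑ i : Fin N, (N - 1 - (i : ℕ)) * (i : ℕ)) * h2

theorem irr_cross {G W : Type} [Group G] [Fintype G] [AddCommGroup W] [Module ℂ W]
    [FiniteDimensional ℂ W] (ρ : Representation ℂ G W)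
    (hn : ∑ g : G, ρ.character g⁻¹ * ρ.character g = (Fintype.card G : ℂ))
    (a b : Module.End ℂ W) (ha : LinearMap.trace ℂ W a ≠ 0) (hb : LinearMap.trace ℂ W b ≠ 0) :
    ∃ g, a * ρ g * b ≠ 0 := by
  by_contra hcon
  push Not at hcon
  have hG : (Nat.card G : ℂ) ≠ 0 := by exact_mod_cast Nat.card_pos.ne'
  have := invertibleOfNonzero hG
  have h1 := Representation.card_inv_mul_sum_char_eq_finrank (Representation.linHom ρ ρ)
  simp only [Representation.char_linHom] at h1
  rw [hn, Fintype.card_eq_nat_card, inv_mul_cancel₀ hG] at h1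
  have h1' : Module.finrank ℂ (Representation.invariants (Representation.linHom ρ ρ)) = 1 := by
    exact_mod_cast h1.symm
  have hmem : ∀ f : Module.End ℂ W, (∀ g, ρ g * f * ρ g⁻¹ = f) →
      f ∈ Representation.invariants (Representation.linHom ρ ρ) := by
    intro f hf g
    rw [Representation.linHom_apply]
    exact hf g
  have hid : (1 : Module.End ℂ W) ∈ Representation.invariants (Representation.linHom ρ ρ) := by
    apply hmem; intro g; rw [mul_one, ← map_mul, mul_inv_cancel, map_one]
  have hne : (⟨1, hid⟩ : Representation.invariants (Representation.linHom ρ ρ)) ≠ 0 := by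
    intro h
    have h' : (1 : Module.End ℂ W) = 0 := congrArg Subtype.val h
    apply ha
    rw [← mul_one a, h', mul_zero, map_zero]
  let Z : Module.End ℂ W := ∑ g : G, ρ g * b * ρ g⁻¹
  have hZ : Z ∈ Representation.invariants (Representation.linHom ρ ρ) := by
    apply hmem
    intro x
    simp only [Z, Finset.mul_sum, Finset.sum_mul]
    refine Fintype.sum_equiv (Equiv.mulLeft x) _ _ fun g => ?_
    simp [mul_assoc]
  obtain ⟨c, hc⟩ := (finrank_eq_one_iff_of_nonzero' _ hne).1 h1' ⟨Z, hZ⟩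
  have hc' : c • (1 : Module.End ℂ W) = Z := congrArg Subtype.val hc
  have htr : LinearMap.trace ℂ W Z = Fintype.card G * LinearMap.trace ℂ W b := by
    simp only [Z, map_sum]
    rw [Finset.sum_congr rfl (g := fun _ => LinearMap.trace ℂ W b), Finset.sum_const, nsmul_eq_mul,
      Finset.card_univ]
    intro g _
    rw [LinearMap.trace_mul_comm, ← mul_assoc, ← map_mul, inv_mul_cancel, map_one, one_mul]
  have haZ : a * Z = 0 := by
    simp only [Z, Finset.mul_sum]
    refine Finset.sum_eq_zero fun g _ => ?_
    rw [← mul_assoc, ← mul_assoc, hcon, zero_mul]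
  have hc0 : c ≠ 0 := by
    rintro rfl
    rw [zero_smul] at hc'
    rw [← hc', map_zero] at htr
    have : (Fintype.card G : ℂ) ≠ 0 := by exact_mod_cast Fintype.card_pos.ne'
    exact mul_ne_zero this hb htr.symm
  rw [← hc', mul_smul_comm, mul_one] at haZ
  rw [(smul_eq_zero.1 haZ).resolve_left hc0, map_zero] at ha
  exact ha rfl

def ysum {A : Type} {n : ℕ} (χ : Equiv.Perm (Fin n) → ℤ) (f : Fin n → A) : ℤ :=
  ∑ w, if (∀ i, f (w i) = f i) then χ w else 0

theorem perm_cross {n : ℕ} {W : Type} [AddCommGroup W] [Module ℂ W]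
    [FiniteDimensional ℂ W] (ρ : Representation ℂ (Equiv.Perm (Fin n)) W)
    (χ : Equiv.Perm (Fin n) → ℤ) (hρ : ∀ g, ρ.character g = (χ g : ℂ))
    (hn : ∑ g, χ g⁻¹ * χ g = (n.factorial : ℤ))
    {A B : Type} (f : Fin n → A) (c : Fin n → B)
    (hf : ysum χ f ≠ 0) (hc : ysum (fun w => χ w * (Equiv.Perm.sign w : ℤ)) c ≠ 0) :
    ∃ g : Equiv.Perm (Fin n), ∀ i j, i ≠ j → c i = c j → f (g i) ≠ f (g j) := by
  let a : Module.End ℂ W := ∑ w, if (∀ i, f (w i) = f i) then ρ w else 0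
  let b : Module.End ℂ W := ∑ w, if (∀ i, c (w i) = c i) then ((Equiv.Perm.sign w : ℤ) : ℂ) • ρ w else 0
  have ha : LinearMap.trace ℂ W a = (ysum χ f : ℂ) := by
    simp only [a, ysum, map_sum, Int.cast_sum]
    refine Finset.sum_congr rfl fun w _ => ?_
    split_ifs
    · exact hρ w
    · simp
  have hb : LinearMap.trace ℂ W b = (ysum (fun w => χ w * (Equiv.Perm.sign w : ℤ)) c : ℂ) := by
    simp only [b, ysum, map_sum, Int.cast_sum]
    refine Finset.sum_congr rfl fun w _ => ?_
    split_ifs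
    · rw [map_smul, show LinearMap.trace ℂ W (ρ w) = _ from hρ w, Int.cast_mul, smul_eq_mul, mul_comm]
    · simp
  obtain ⟨g, hg⟩ := irr_cross ρ (by
      simp only [hρ]
      rw [Fintype.card_perm, Fintype.card_fin]
      exact_mod_cast hn) a b (by rw [ha]; exact_mod_cast hf) (by rw [hb]; exact_mod_cast hc)
  refine ⟨g, fun i j hij hcij hfij => hg ?_⟩
  let τ := Equiv.swap i j
  have hτb : ρ τ * b = -b := by
    simp only [b, Finset.mul_sum, ← Finset.sum_neg_distrib]
    refine Fintype.sum_equiv (Equiv.mulLeft τ) _ _ fun w => ?_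
    have hcτ : ∀ x, c (τ x) = c x := by
      intro x
      by_cases h1 : x = i
      · rw [h1, Equiv.swap_apply_left, hcij]
      · by_cases h2 : x = j
        · rw [h2, Equiv.swap_apply_right, hcij]
        · rw [Equiv.swap_apply_of_ne_of_ne h1 h2]
    have hiff : (∀ x, c ((τ * w) x) = c x) ↔ (∀ x, c (w x) = c x) := by
      simp only [Equiv.Perm.mul_apply, hcτ]
    simp only [Equiv.coe_mulLeft, hiff]
    split_ifs
    · rw [map_mul, map_mul, Equiv.Perm.sign_swap hij]
      simp
    · simp
  have haτ : a * ρ (g * τ * g⁻¹) = a := by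
    simp only [a, Finset.sum_mul]
    refine Fintype.sum_equiv (Equiv.mulRight (g * τ * g⁻¹)) _ _ fun w => ?_
    have hfτ : ∀ x, f ((g * τ * g⁻¹) x) = f x := by
      intro x
      have : g * τ * g⁻¹ = Equiv.swap (g i) (g j) := by
        rw [Equiv.swap_apply_apply]
      rw [this]
      by_cases h1 : x = g i
      · rw [h1, Equiv.swap_apply_left, hfij]
      · by_cases h2 : x = g j
        · rw [h2, Equiv.swap_apply_right, hfij]
        · rw [Equiv.swap_apply_of_ne_of_ne h1 h2]
    have hiff : (∀ x, f ((w * (g * τ * g⁻¹)) x) = f x) ↔ (∀ x, f (w x) = f x) := by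
      constructor
      · intro h x
        have := h ((g * τ * g⁻¹)⁻¹ x)
        have e0 : (g * τ * g⁻¹) ((g * τ * g⁻¹)⁻¹ x) = x := by
          rw [← Equiv.Perm.mul_apply, mul_inv_cancel, Equiv.Perm.one_apply]
        rw [Equiv.Perm.mul_apply, e0] at this
        rw [this]
        have := hfτ ((g * τ * g⁻¹)⁻¹ x)
        rw [e0] at this
        exact this.symm
      · intro h x
        rw [Equiv.Perm.mul_apply, h, hfτ]
    simp only [Equiv.coe_mulRight, hiff]
    split_ifs
    · rw [map_mul ρ w]
    · simp
  have key : a * ρ g * b = -(a * ρ g * b) := by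
    conv_lhs => rw [← haτ]
    rw [mul_assoc a, ← map_mul, mul_assoc, inv_mul_cancel_right, map_mul, mul_assoc, mul_assoc, hτb]
    simp [mul_assoc]
  have h2 : (2 : ℂ) • (a * ρ g * b) = 0 := by
    rw [two_smul]
    nth_rewrite 2 [key]
    exact add_neg_cancel _
  exact (smul_eq_zero.1 h2).resolve_left two_ne_zero

theorem ysum_div {n : ℕ} {W : Type} [AddCommGroup W] [Module ℂ W]
    [FiniteDimensional ℂ W] (ρ : Representation ℂ (Equiv.Perm (Fin n)) W)
    (χ : Equiv.Perm (Fin n) → ℤ) (hρ : ∀ g, ρ.character g = (χ g : ℂ))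
    (f : Fin n → ℕ) : ∃ m : ℕ, ysum χ f = stabc f * m := by
  let H := youngSubgroup n f
  have hG : (Nat.card H : ℂ) ≠ 0 := by exact_mod_cast Nat.card_pos.ne'
  have := invertibleOfNonzero hG
  have h1 := Representation.card_inv_mul_sum_char_eq_finrank
    (MonoidHom.comp ρ H.subtype : Representation ℂ H W)
  have h2 : (Nat.card H) = stabc f := by
    rw [Nat.card_eq_fintype_card, Fintype.card_subtype]
    unfold stabc
    refine congrArg Finset.card (Finset.ext fun w => ?_)
    simp only [Finset.mem_filter, Finset.mem_univ, true_and]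
    exact Iff.rfl
  refine ⟨Module.finrank ℂ (Representation.invariants (MonoidHom.comp ρ H.subtype : Representation ℂ H W)), ?_⟩
  rw [inv_mul_eq_iff_eq_mul₀ hG, h2] at h1
  have h3 : (ysum χ f : ℂ) = ∑ g : H, Representation.character (MonoidHom.comp ρ H.subtype : Representation ℂ H W) g := by
    unfold ysum
    have e0 : ∀ w : Equiv.Perm (Fin n), ((if (∀ i, f (w i) = f i) then χ w else 0 : ℤ) : ℂ)
        = if w ∈ H then ρ.character w else 0 := by
      intro w
      by_cases hw : w ∈ H
      · rw [if_pos hw, if_pos (show ∀ i, f (w i) = f i from hw), hρ]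
      · rw [if_neg hw, if_neg (show ¬ ∀ i, f (w i) = f i from hw), Int.cast_zero]
    have e1 : ∑ w : Equiv.Perm (Fin n), (if w ∈ H then ρ.character w else 0)
        = ∑ w ∈ Finset.univ.filter (fun w => w ∈ H), ρ.character w := (Finset.sum_filter _ _).symm
    rw [Int.cast_sum]
    refine (Finset.sum_congr rfl fun w _ => ?_).trans (e1.trans ?_)
    · rw [← e0]; congr
    rw [Finset.sum_subtype (p := fun w => w ∈ H) _ (by
      intro w
      simp only [Finset.mem_filter, Finset.mem_univ, true_and])]
    exact Finset.sum_congr rfl fun w _ => rfl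
  rw [← h3] at h1
  exact_mod_cast h1

theorem pair_ind {n : ℕ} (χ : Equiv.Perm (Fin n) → ℤ) (hcl : ∀ g h, χ (h * g * h⁻¹) = χ g)
    (f : Fin n → ℕ) (φ : Equiv.Perm (Fin n) → ℤ)
    (h : pairS n (fun w => (χ w : ℚ)) (indCF (youngSubgroup n f) (fun w => (φ w : ℚ))) ≠ 0) :
    ysum (fun w => χ w * φ w) f ≠ 0 := by
  intro h0
  apply h
  unfold pairS indCF
  have : ∑ w, (χ w : ℚ) * ((Nat.card (youngSubgroup n f) : ℚ)⁻¹ * ∑ g : Equiv.Perm (Fin n),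
      if g⁻¹ * w * g ∈ youngSubgroup n f then (φ (g⁻¹ * w * g) : ℚ) else 0)
      = (Nat.card (youngSubgroup n f) : ℚ)⁻¹ * ∑ g : Equiv.Perm (Fin n), (ysum (fun w => χ w * φ w) f : ℚ) := by
    simp only [Finset.mul_sum]
    rw [Finset.sum_comm]
    refine Finset.sum_congr rfl fun g _ => ?_
    unfold ysum
    rw [Int.cast_sum, Finset.mul_sum]
    refine Fintype.sum_equiv (MulAut.conj g⁻¹).toEquiv _ _ fun w => ?_
    have e : (MulAut.conj g⁻¹).toEquiv w = g⁻¹ * w * g := by simp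
    rw [e]
    dsimp only
    have hx : χ (g⁻¹ * w * g) = χ w := by simpa using hcl w g⁻¹
    have hm : g⁻¹ * w * g ∈ youngSubgroup n f ↔ ∀ i, f ((g⁻¹ * w * g) i) = f i := Iff.rfl
    by_cases hh : ∀ i, f ((g⁻¹ * w * g) i) = f i
    · rw [if_pos (hm.2 hh), if_pos hh, hx]; push_cast; ring
    · rw [if_neg (fun q => hh (hm.1 q)), if_neg hh]; simp
  rw [this, h0]
  simp

theorem set_sum (N : ℕ) : ∀ S : Finset ℕ, (∀ x ∈ S, x < N) →
    ∑ x ∈ S, x ≤ ∑ i ∈ Finset.range S.card, (N - 1 - i) := by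
  induction N with
  | zero =>
    intro S hS
    have : S = ∅ := Finset.eq_empty_of_forall_notMem fun x hx => absurd (hS x hx) (by omega)
    subst this; simp
  | succ N ih =>
    intro S hS
    by_cases hN : N ∈ S
    · rw [← Finset.insert_erase hN, Finset.sum_insert (Finset.notMem_erase _ _),
        Finset.card_insert_of_notMem (Finset.notMem_erase _ _), Finset.sum_range_succ']
      have := ih (S.erase N) (by
        intro x hx
        have h1 := Finset.ne_of_mem_erase hx
        have h2 := hS x (Finset.mem_of_mem_erase hx)
        omega)
      have e : ∑ k ∈ Finset.range (S.erase N).card, (N + 1 - 1 - (k + 1))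
          = ∑ i ∈ Finset.range (S.erase N).card, (N - 1 - i) :=
        Finset.sum_congr rfl fun k _ => by omega
      rw [e]; omega
    · refine (ih S ?_).trans (Finset.sum_le_sum fun i _ => by omega)
      intro x hx
      have h2 := hS x hx
      have : x ≠ N := fun h => hN (h ▸ hx)
      omega

theorem fib_rowLens (n : ℕ) (f : Fin n → ℕ) (ν : YoungDiagram)
    (h : ∀ k, (Finset.univ.filter (fun i => f i = k)).card = ν.rowLen k) :
    fiberSizes n f = (↑ν.rowLens : Multiset ℕ) := by
  have himg : Finset.univ.image f = Finset.range (ν.colLen 0) := by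
    ext k
    have h1 : k ∈ Finset.range (ν.colLen 0) ↔ 0 < ν.rowLen k := by
      rw [Finset.mem_range, ← YoungDiagram.mem_iff_lt_colLen, YoungDiagram.mem_iff_lt_rowLen]
    rw [h1, ← h k, Finset.card_pos]
    constructor
    · intro hk
      obtain ⟨i, _, hi⟩ := Finset.mem_image.1 hk
      exact ⟨i, by simp [hi]⟩
    · rintro ⟨i, hi⟩
      exact Finset.mem_image.2 ⟨i, Finset.mem_univ _, (Finset.mem_filter.1 hi).2⟩
  unfold fiberSizes
  have h2 : (Finset.univ.image f).val = ((List.range (ν.colLen 0) : List ℕ) : Multiset ℕ) := by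
    rw [himg]; rfl
  unfold YoungDiagram.rowLens
  rw [h2, Multiset.map_coe]
  congr 1
  refine List.map_congr_left fun k _ => ?_
  rw [← h k]

theorem ysum_comp {A B : Type} {n : ℕ} (χ : Equiv.Perm (Fin n) → ℤ) (f : Fin n → A) (φ : A → B)
    (hφ : Function.Injective φ) : ysum χ (fun i => φ (f i)) = ysum χ f := by
  unfold ysum
  refine Finset.sum_congr rfl fun w _ => ?_
  simp only [hφ.eq_iff]

theorem stabc_comp {A B : Type} {n : ℕ} (f : Fin n → A) (φ : A → B)
    (hφ : Function.Injective φ) : stabc (fun i => φ (f i)) = stabc f := by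
  unfold stabc
  simp only [hφ.eq_iff]

theorem fib_cont {n N : ℕ} (μ : YoungDiagram) (hN : μ.colLen 0 ≤ N) (f : Fin n → Fin N)
    (hf : ∀ j, cont f j = lrow μ N j) :
    fiberSizes n (fun i => N - 1 - (f i : ℕ)) = (↑μ.rowLens : Multiset ℕ) := by
  apply fib_rowLens
  intro k
  by_cases hk : k < N
  · have := hf ⟨N - 1 - k, by omega⟩
    rw [cont_apply, Fintype.card_subtype] at this
    unfold lrow at this
    rw [show N - 1 - (N - 1 - k) = k by omega] at this
    rw [← this]
    refine congrArg Finset.card (Finset.ext fun i => ?_)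
    simp only [Finset.mem_filter, Finset.mem_univ, true_and, Fin.ext_iff]
    have := (f i).2
    omega
  · have h0 : μ.rowLen k = 0 := by
      by_contra hne
      have h1 : (k, 0) ∈ μ := YoungDiagram.mem_iff_lt_rowLen.2 (Nat.pos_of_ne_zero hne)
      have := YoungDiagram.mem_iff_lt_colLen.1 h1
      omega
    rw [h0, Finset.card_eq_zero]
    refine Finset.eq_empty_of_forall_notMem fun i hi => ?_
    have := (Finset.mem_filter.1 hi).2
    have := (f i).2
    omega

theorem col_fib {n : ℕ} (μ : YoungDiagram) (e : Fin n ≃ μ.cells) :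
    fiberSizes n (fun i => (e i).1.2) = (↑μ.transpose.rowLens : Multiset ℕ) := by
  apply fib_rowLens
  intro k
  rw [YoungDiagram.rowLen_transpose, YoungDiagram.colLen_eq_card]
  refine Finset.card_bij (fun i _ => (e i).1) ?_ ?_ ?_
  · intro i hi
    exact YoungDiagram.mem_col_iff.2 ⟨(e i).2, (Finset.mem_filter.1 hi).2⟩
  · intro i _ j _ h
    exact e.injective (Subtype.ext h)
  · intro p hp
    obtain ⟨h1, h2⟩ := YoungDiagram.mem_col_iff.1 hp
    exact ⟨e.symm ⟨p, h1⟩, by simp [h2], by simp⟩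

theorem dom_sum {n N : ℕ} (μ : YoungDiagram) (hN : μ.colLen 0 ≤ N) (e : Fin n ≃ μ.cells)
    (f : Fin n → Fin N) (g : Equiv.Perm (Fin n))
    (h : ∀ i j, i ≠ j → (e i).1.2 = (e j).1.2 → f (g i) ≠ f (g j)) :
    ∑ j : Fin N, (j : ℕ) * cont f j ≤ ∑ j : Fin N, (j : ℕ) * lrow μ N j := by
  have h1 : ∑ j : Fin N, (j : ℕ) * cont f j = ∑ i, (f i : ℕ) := by
    rw [← Finset.sum_fiberwise Finset.univ f]
    refine Finset.sum_congr rfl fun a _ => ?_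
    rw [cont_apply, Fintype.card_subtype, mul_comm, ← smul_eq_mul, ← Finset.sum_const]
    refine Finset.sum_congr rfl fun i hi => ?_
    rw [(Finset.mem_filter.1 hi).2]
  have h2 : ∑ i, (f i : ℕ) = ∑ i, (f (g i) : ℕ) := (Equiv.sum_comp g (fun i => (f i : ℕ))).symm
  let Fn : ℕ × ℕ → ℕ := fun p => if hp : p ∈ μ.cells then (f (g (e.symm ⟨p, hp⟩)) : ℕ) else 0
  have h3 : ∑ i, (f (g i) : ℕ) = ∑ p ∈ μ.cells, Fn p := by
    rw [← Finset.sum_attach μ.cells, ← Equiv.sum_comp e.symm, Finset.univ_eq_attach]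
    refine Finset.sum_congr rfl fun p _ => ?_
    simp only [Fn]
    rw [dif_pos p.2]
  have h4 : ∑ j : Fin N, (j : ℕ) * lrow μ N j = ∑ p ∈ μ.cells, (N - 1 - p.1) := by
    rw [cells_sum μ N hN]
    refine Finset.sum_congr rfl fun j _ => ?_
    have := j.2
    have e1 : N - 1 - (N - 1 - (j : ℕ)) = j := by omega
    simp only [e1]
    rw [Finset.sum_const, Finset.card_range, smul_eq_mul, mul_comm]
  rw [h1, h2, h3, h4]
  rw [← Finset.sum_fiberwise_of_maps_to (s := μ.cells) (t := μ.cells.image Prod.snd) (g := Prod.snd)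
      (fun p hp => Finset.mem_image_of_mem _ hp) Fn,
    ← Finset.sum_fiberwise_of_maps_to (s := μ.cells) (t := μ.cells.image Prod.snd) (g := Prod.snd)
      (fun p hp => Finset.mem_image_of_mem _ hp) (fun p => N - 1 - p.1)]
  refine Finset.sum_le_sum fun k _ => ?_
  have hcol : μ.cells.filter (fun p => p.2 = k) = μ.col k := rfl
  rw [hcol]
  have hinj : Set.InjOn Fn (μ.col k) := by
    intro p hp p' hp' hpp
    obtain ⟨a1, a2⟩ := YoungDiagram.mem_col_iff.1 (Finset.mem_coe.1 hp)
    obtain ⟨b1, b2⟩ := YoungDiagram.mem_col_iff.1 (Finset.mem_coe.1 hp')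
    by_contra hne
    simp only [Fn] at hpp
    rw [dif_pos (show p ∈ μ.cells from a1), dif_pos (show p' ∈ μ.cells from b1)] at hpp
    refine h (e.symm ⟨p, a1⟩) (e.symm ⟨p', b1⟩) ?_ ?_ (Fin.ext hpp)
    · intro hh
      exact hne (congrArg Subtype.val (e.symm.injective hh))
    · simp [a2, b2]
  have := set_sum N ((μ.col k).image Fn) (by
    intro x hx
    obtain ⟨p, hp, rfl⟩ := Finset.mem_image.1 hx
    simp only [Fn]
    rw [dif_pos (show p ∈ μ.cells from (YoungDiagram.mem_col_iff.1 hp).1)]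
    exact Fin.is_lt _)
  rw [Finset.sum_image hinj, Finset.card_image_of_injOn hinj] at this
  refine this.trans (le_of_eq ?_)
  rw [← YoungDiagram.colLen_eq_card, YoungDiagram.col_eq_prod, Finset.sum_product]
  simp

theorem sig_one {N : ℕ} (σ : Equiv.Perm (Fin N)) (a b : Fin N → ℕ)
    (h : ∀ j, (σ j : ℕ) + a j = j + b j) (hle : ∑ j : Fin N, (j : ℕ) * a j ≤ ∑ j : Fin N, (j : ℕ) * b j) :
    σ = 1 := by
  have h1 : ∑ j : Fin N, (j : ℤ) * (j - σ j) ≤ 0 := by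
    have e : ∀ j : Fin N, (j : ℤ) * (j - σ j) = (j : ℤ) * a j - (j : ℤ) * b j := by
      intro j
      have : ((σ j : ℕ) : ℤ) + a j = j + b j := by exact_mod_cast h j
      rw [← mul_sub]; congr 1; linarith
    simp only [e, Finset.sum_sub_distrib]
    have : ∑ j : Fin N, (j : ℤ) * a j ≤ ∑ j : Fin N, (j : ℤ) * b j := by exact_mod_cast hle
    linarith
  have h2 : ∑ j : Fin N, ((σ j : ℕ) : ℤ) ^ 2 = ∑ j : Fin N, ((j : ℕ) : ℤ) ^ 2 :=
    Equiv.sum_comp σ (fun j => ((j : ℕ) : ℤ) ^ 2)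
  have h3 : ∑ j : Fin N, (((j : ℕ) : ℤ) - σ j) ^ 2 ≤ 0 := by
    have : ∀ j : Fin N, (((j : ℕ) : ℤ) - σ j) ^ 2
        = 2 * ((j : ℤ) * (j - σ j)) + (((σ j : ℕ) : ℤ) ^ 2 - ((j : ℕ) : ℤ) ^ 2) := by
      intro j; ring
    simp only [this, Finset.sum_add_distrib, ← Finset.mul_sum, Finset.sum_sub_distrib, h2]
    linarith
  have h4 := (Finset.sum_eq_zero_iff_of_nonneg (fun j _ => sq_nonneg _)).1
    (le_antisymm h3 (Finset.sum_nonneg fun j _ => sq_nonneg _))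
  ext j
  have := h4 j (Finset.mem_univ _)
  have := pow_eq_zero_iff (two_ne_zero) |>.1 this
  rw [Equiv.Perm.one_apply]
  omega

theorem vch_expand {n N : ℕ} (l : Fin N →₀ ℕ) (w : Equiv.Perm (Fin n)) :
    vch l w = ∑ σ : Equiv.Perm (Fin N), ∑ f : Fin n → Fin N,
      if (∀ i, f (w i) = f i) then
        (if ∀ j, ((σ⁻¹ j : Fin N) : ℕ) + cont f j = l j then (Equiv.Perm.sign σ : ℤ) else 0) else 0 := by
  unfold vch
  rw [Matrix.det_apply, Finset.sum_mul, MvPolynomial.coeff_sum]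
  refine Finset.sum_congr rfl fun σ _ => ?_
  unfold PP
  rw [Finset.mul_sum, MvPolynomial.coeff_sum]
  refine Finset.sum_congr rfl fun f _ => ?_
  split_ifs with h1 h2
  all_goals try rw [mul_zero, MvPolynomial.coeff_zero]
  all_goals
    let d : Fin N →₀ ℕ := Finsupp.equivFunOnFinite.symm fun j => ((σ⁻¹ j : Fin N) : ℕ)
    have e1 : ∏ i, Matrix.vandermonde (MvPolynomial.X : Fin N → MvPolynomial (Fin N) ℤ) (σ i) i
        = MvPolynomial.monomial d 1 := by
      rw [MvPolynomial.monomial_eq, Finsupp.prod_fintype _ _ (by simp), map_one, one_mul,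
        ← Equiv.prod_comp σ (fun i => (MvPolynomial.X i : MvPolynomial (Fin N) ℤ) ^ d i)]
      refine Finset.prod_congr rfl fun i _ => ?_
      simp [Matrix.vandermonde_apply, d]
    have e2 : ∏ i, (MvPolynomial.X (f i) : MvPolynomial (Fin N) ℤ) = MvPolynomial.monomial (cont f) 1 := by
      rw [MvPolynomial.monomial_eq, Finsupp.prod_fintype _ _ (by simp), map_one, one_mul,
        prod_cont f (fun a => (MvPolynomial.X a : MvPolynomial (Fin N) ℤ))]
    have e3 : d + cont f = l ↔ ∀ j, ((σ⁻¹ j : Fin N) : ℕ) + cont f j = l j := by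
      rw [Finsupp.ext_iff]; rfl
    rw [e1, e2, smul_mul_assoc, MvPolynomial.monomial_mul, MvPolynomial.coeff_smul,
      MvPolynomial.coeff_monomial]
  · rw [if_pos (e3.2 h2)]
    simp [Units.smul_def]
  · rw [if_neg (fun h => h2 (e3.1 h))]
    simp

theorem chi_eq {n N : ℕ} (μ : YoungDiagram) (hcard : μ.card = n) (hN : μ.colLen 0 ≤ N)
    (χ : Equiv.Perm (Fin n) → ℤ)
    (hχ : IsIrrCharOf n (↑μ.rowLens : Multiset ℕ) (↑μ.transpose.rowLens : Multiset ℕ) χ)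
    (l : Fin N →₀ ℕ) (hl : ∀ j, l j = lfun μ N j) (hls : ∑ i, l i = n + ∑ k : Fin N, (k : ℕ)) :
    ∀ w, χ w = vch l w := by
  obtain ⟨⟨V, hV⟩, hnorm, h3, h4⟩ := hχ
  have hcl : ∀ g h, χ (h * g * h⁻¹) = χ g := by
    intro g h
    have := FDRep.char_conj V g h
    rw [hV, hV] at this
    exact_mod_cast this
  have hinv : ∀ g, χ g⁻¹ = χ g := by
    intro g
    have : IsConj g g⁻¹ := by
      rw [Equiv.Perm.isConj_iff_cycleType_eq, Equiv.Perm.cycleType_inv]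
    obtain ⟨c, hc⟩ := isConj_iff.1 this
    rw [← hc, hcl]
  have hsq : ∑ w, χ w * χ w = (n.factorial : ℤ) := by
    unfold pairS at hnorm
    have hf : (n.factorial : ℚ) ≠ 0 := by exact_mod_cast n.factorial_ne_zero
    rw [inv_mul_eq_iff_eq_mul₀ hf, mul_one] at hnorm
    dsimp only at hnorm
    exact_mod_cast hnorm
  have hsq' : ∑ g, χ g⁻¹ * χ g = (n.factorial : ℤ) := by
    simp only [hinv]; exact hsq
  have hρ : ∀ g, Representation.character V.ρ g = (χ g : ℂ) := hV
  let e : Fin n ≃ μ.cells := (Fintype.equivOfCardEq (by rw [Fintype.card_fin, Fintype.card_coe]; exact hcard.symm))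
  have hc : ysum (fun w => χ w * (Equiv.Perm.sign w : ℤ)) (fun i => (e i).1.2) ≠ 0 :=
    pair_ind χ hcl _ (fun w => (Equiv.Perm.sign w : ℤ)) (h4 _ (col_fib μ e))
  have hlow : ∀ f : Fin n → Fin N, (∀ j, cont f j = lrow μ N j) → (stabc f : ℤ) ≤ ysum χ f := by
    intro f hf
    have hinj : Function.Injective (fun j : Fin N => N - 1 - (j : ℕ)) := by
      intro a b hab
      have := a.2
      have := b.2
      apply Fin.ext
      dsimp only at hab
      omega
    have hne := pair_ind χ hcl _ (fun _ => 1) (by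
      have := h3 _ (fib_cont μ hN f hf)
      simpa using this)
    simp only [mul_one] at hne
    obtain ⟨m, hm⟩ := ysum_div V.ρ χ hρ (fun i => N - 1 - (f i : ℕ))
    rw [ysum_comp χ f (fun j : Fin N => N - 1 - (j : ℕ)) hinj] at hne hm
    rw [stabc_comp f (fun j : Fin N => N - 1 - (j : ℕ)) hinj] at hm
    have hm0 : m ≠ 0 := by
      rintro rfl
      apply hne; rw [hm]; simp
    rw [hm]
    have : (1 : ℤ) ≤ m := by exact_mod_cast Nat.one_le_iff_ne_zero.2 hm0
    nlinarith [Int.natCast_nonneg (stabc f)]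
  have hzero : ∀ (σ : Equiv.Perm (Fin N)) (f : Fin n → Fin N),
      (∀ j, ((σ⁻¹ j : Fin N) : ℕ) + cont f j = l j) → ysum χ f ≠ 0 → σ = 1 := by
    intro σ f h hy
    obtain ⟨g, hg⟩ := perm_cross V.ρ χ hρ hsq' f (fun i => (e i).1.2) hy hc
    have hle := dom_sum μ hN e f g hg
    have := sig_one σ⁻¹ (fun j => cont f j) (lrow μ N) (fun j => by rw [h j, hl j]; rfl) hle
    exact inv_eq_one.1 this
  have hexp : ∑ w, χ w * vch l w = ∑ σ : Equiv.Perm (Fin N), ∑ f : Fin n → Fin N,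
      (if ∀ j, ((σ⁻¹ j : Fin N) : ℕ) + cont f j = l j then (Equiv.Perm.sign σ : ℤ) else 0) * ysum χ f := by
    simp only [vch_expand, Finset.mul_sum]
    rw [Finset.sum_comm]
    refine Finset.sum_congr rfl fun σ _ => ?_
    rw [Finset.sum_comm]
    refine Finset.sum_congr rfl fun f _ => ?_
    unfold ysum
    rw [Finset.mul_sum]
    refine Finset.sum_congr rfl fun w _ => ?_
    by_cases hh : ∀ i, f (w i) = f i
    · simp only [if_pos hh]; ring
    · simp only [if_neg hh]; ring
  have hlam : ∑ j : Fin N, lrow μ N j = n := by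
    have : ∑ i, l i = ∑ k : Fin N, (k : ℕ) + ∑ j : Fin N, lrow μ N j := by
      rw [← Finset.sum_add_distrib]
      exact Finset.sum_congr rfl fun j _ => hl j
    omega
  have hge : (n.factorial : ℤ) ≤ ∑ w, χ w * vch l w := by
    rw [hexp, Finset.sum_eq_single (1 : Equiv.Perm (Fin N))]
    · let m : Fin N →₀ ℕ := Finsupp.equivFunOnFinite.symm (lrow μ N)
      have hb := burn (n := n) m hlam
      rw [← hb, Nat.cast_sum, Finset.sum_filter]
      refine Finset.sum_le_sum fun f _ => ?_
      have hiff : cont f = m ↔ ∀ j, cont f j = lrow μ N j := by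
        rw [Finsupp.ext_iff]; rfl
      have hiff2 : (∀ j, (((1 : Equiv.Perm (Fin N))⁻¹ j : Fin N) : ℕ) + cont f j = l j)
          ↔ ∀ j, cont f j = lrow μ N j := by
        refine forall_congr' fun j => ?_
        rw [hl, inv_one, Equiv.Perm.one_apply]
        unfold lfun
        exact Nat.add_left_cancel_iff
      by_cases hh : ∀ j, cont f j = lrow μ N j
      · rw [if_pos (hiff.2 hh), if_pos (hiff2.2 hh)]
        simpa using hlow f hh
      · rw [if_neg (fun q => hh (hiff.1 q)), if_neg (fun q => hh (hiff2.1 q)), zero_mul]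
    · intro σ _ hσ
      refine Finset.sum_eq_zero fun f _ => ?_
      split_ifs with hh
      · by_cases hy : ysum χ f = 0
        · rw [hy, mul_zero]
        · exact absurd (hzero σ f hh hy) hσ
      · rw [zero_mul]
    · intro h; exact absurd (Finset.mem_univ _) h
  have hinj : Function.Injective l := by
    have : StrictMono (lfun μ N) := fun i j h => lfun_lt μ N h
    intro a b hab
    rw [hl, hl] at hab
    exact this.injective hab
  have hv := vch_norm (n := n) l hls hinj
  have hd : ∑ w, (χ w - vch l w) ^ 2 ≤ 0 := by
    have : ∀ w, (χ w - vch l w) ^ 2 = χ w * χ w + vch l w * vch l w - 2 * (χ w * vch l w) := by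
      intro w; ring
    simp only [this, Finset.sum_sub_distrib, Finset.sum_add_distrib, ← Finset.mul_sum]
    rw [hsq, hv]
    linarith
  have h5 := (Finset.sum_eq_zero_iff_of_nonneg (fun w _ => sq_nonneg _)).1
    (le_antisymm hd (Finset.sum_nonneg fun w _ => sq_nonneg _))
  intro w
  have := pow_eq_zero_iff (two_ne_zero) |>.1 (h5 w (Finset.mem_univ _))
  exact sub_eq_zero.1 this

theorem Xpow_inj : Function.Injective (fun k : ℕ => (RatFunc.X : RatFunc ℚ) ^ k) := by
  intro a b h
  dsimp only at h
  rw [← RatFunc.algebraMap_X, ← map_pow, ← map_pow] at h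
  have := congrArg Polynomial.natDegree (RatFunc.algebraMap_injective ℚ h)
  simpa using this

theorem Xpow_ne (m : ℕ) (hm : m ≠ 0) : (1 : RatFunc ℚ) - RatFunc.X ^ m ≠ 0 := by
  intro h
  apply hm
  apply Xpow_inj
  dsimp only
  rw [pow_zero]
  exact (sub_eq_zero.1 h).symm

theorem osz_ne {n : ℕ} (w : Equiv.Perm (Fin n)) (o : Orb w) : osz w o ≠ 0 := by
  unfold osz
  obtain ⟨i, hi⟩ := Quotient.exists_rep o
  have : Nonempty {i : Fin n // (Quotient.mk _ i : Orb w) = o} := ⟨⟨i, hi⟩⟩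
  exact Fintype.card_ne_zero

theorem hook_ne (μ : YoungDiagram) (c : ℕ × ℕ) (hc : c ∈ μ.cells) : hookLen μ c ≠ 0 := by
  obtain ⟨i, j⟩ := c
  have h1 := YoungDiagram.mem_iff_lt_rowLen.1 (show (i, j) ∈ μ from hc)
  have h2 := YoungDiagram.mem_iff_lt_colLen.1 (show (i, j) ∈ μ from hc)
  unfold hookLen
  dsimp only
  omega

theorem colLen_le (μ : YoungDiagram) : μ.colLen 0 ≤ μ.card := by
  rw [YoungDiagram.colLen_eq_card]
  exact Finset.card_le_card (Finset.filter_subset _ _)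

theorem step_four {n N : ℕ} (μ : YoungDiagram) (hcard : μ.card = n) (hN : n ≤ N)
    (χ : Equiv.Perm (Fin n) → ℤ)
    (hχ : IsIrrCharOf n (↑μ.rowLens : Multiset ℕ) (↑μ.transpose.rowLens : Multiset ℕ) χ)
    (q : RatFunc ℚ) (hq : q = RatFunc.X) :
    (∑ w, (χ w : RatFunc ℚ) * PP w (fun k : Fin N => q ^ (k : ℕ))) * ∏ c ∈ μ.cells, (1 - q ^ hookLen μ c)
      = n.factorial * (q ^ nInv μ * ∏ c ∈ μ.cells, (1 - q ^ (N + c.2 - c.1))) := by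
  have hN' : μ.colLen 0 ≤ N := (colLen_le μ).trans (hcard.le.trans hN)
  let l : Fin N →₀ ℕ := Finsupp.equivFunOnFinite.symm (lfun μ N)
  have hl : ∀ j, l j = lfun μ N j := fun j => rfl
  have hls : ∑ i, l i = n + ∑ k : Fin N, (k : ℕ) := by
    have h1 : ∑ j : Fin N, lrow μ N j = n := by
      have := cells_sum μ N hN' (fun _ => (1 : ℕ))
      simp only [Finset.sum_const, smul_eq_mul, mul_one, Finset.card_range] at this
      rw [← this]; exact hcard
    simp only [hl, lfun, Finset.sum_add_distrib]
    omega
  have hχv := chi_eq μ hcard hN' χ hχ l hl hls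
  have hc := cauchy_coeff (n := n) (fun k : Fin N => q ^ (k : ℕ)) l hls
  have hdet : (Matrix.of fun i j : Fin N => (q ^ (i : ℕ)) ^ l j).det
      = (Matrix.vandermonde fun i => q ^ lfun μ N i).det := by
    rw [← Matrix.det_transpose]
    congr 1
    ext i j
    simp only [Matrix.transpose_apply, Matrix.of_apply, Matrix.vandermonde_apply, hl]
    rw [← pow_mul, ← pow_mul, mul_comm]
  rw [hdet] at hc
  have hk := hook_id q μ N hN'
  have hV : (Matrix.vandermonde fun i : Fin N => q ^ (i : ℕ)).det ≠ 0 := by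
    rw [Matrix.det_vandermonde_ne_zero_iff, hq]
    intro a b hab
    exact Fin.ext (Xpow_inj hab)
  have hs : ∑ w : Equiv.Perm (Fin n), (vch l w : RatFunc ℚ) * ((Matrix.vandermonde fun i : Fin N => q ^ (i : ℕ)).det *
      PP w (fun k : Fin N => q ^ (k : ℕ)))
      = (Matrix.vandermonde fun i : Fin N => q ^ (i : ℕ)).det *
        ∑ w, (χ w : RatFunc ℚ) * PP w (fun k : Fin N => q ^ (k : ℕ)) := by
    rw [Finset.mul_sum]
    refine Finset.sum_congr rfl fun w _ => ?_
    rw [hχv w]; ring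
  rw [hs] at hc
  apply mul_left_cancel₀ hV
  rw [← mul_assoc, hc, mul_assoc, mul_comm (Matrix.det _), hk]
  ring

theorem det_plus {n : ℕ} (w : Equiv.Perm (Fin n)) :
    Matrix.det ((1 : Matrix (Fin n) (Fin n) F) + ss • permM n w) = ∏ o : Orb w, (1 - (-ss) ^ osz w o) := by
  rw [← det_orb]
  congr 1
  ext i j
  simp only [Matrix.add_apply, Matrix.smul_apply, permM, Matrix.of_apply, Matrix.one_apply, smul_eq_mul]
  split_ifs <;> ring

theorem det_minus {n : ℕ} (w : Equiv.Perm (Fin n)) :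
    Matrix.det ((1 : Matrix (Fin n) (Fin n) F) - tt • permM n w) = ∏ o : Orb w, (1 - tt ^ osz w o) := by
  rw [← det_orb]
  congr 1
  ext i j
  simp only [Matrix.sub_apply, Matrix.smul_apply, permM, Matrix.of_apply, Matrix.one_apply, smul_eq_mul]
  split_ifs <;> ring

theorem poly_eq (n : ℕ) (μ : YoungDiagram) (hcard : μ.card = n)
    (χ : Equiv.Perm (Fin n) → ℤ)
    (hχ : IsIrrCharOf n (↑μ.rowLens : Multiset ℕ) (↑μ.transpose.rowLens : Multiset ℕ) χ)
    (q : RatFunc ℚ) (hq : q = RatFunc.X) :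
    (∑ w, Polynomial.C ((χ w : RatFunc ℚ) / ∏ o : Orb w, (1 - q ^ osz w o)) *
        ∏ o : Orb w, (1 - (-Polynomial.X) ^ osz w o) : Polynomial (RatFunc ℚ))
      = Polynomial.C (n.factorial * q ^ nInv μ / ∏ c ∈ μ.cells, (1 - q ^ hookLen μ c)) *
        ∏ c ∈ μ.cells, (1 + Polynomial.X * Polynomial.C (q ^ content c)) := by
  have hq0 : q ≠ 0 := by rw [hq]; exact RatFunc.X_ne_zero
  apply Polynomial.eq_of_infinite_eval_eq
  refine Set.infinite_of_injective_forall_mem (f := fun k : ℕ => - q ^ (n + k)) ?_ ?_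
  · intro a b hab
    have := neg_injective hab
    rw [hq] at this
    have := Xpow_inj this
    omega
  · intro k
    have h4 := step_four (N := n + k) μ hcard (by omega) χ hχ q hq
    have hH : ∏ c ∈ μ.cells, (1 - q ^ hookLen μ c) ≠ 0 := by
      rw [Finset.prod_ne_zero_iff]
      intro c hc
      rw [hq]
      exact Xpow_ne _ (hook_ne μ c hc)
    rw [Set.mem_ofPred_eq, Polynomial.eval_finsetSum]
    simp only [Polynomial.eval_mul, Polynomial.eval_C, Polynomial.eval_prod, Polynomial.eval_sub,
      Polynomial.eval_add, Polynomial.eval_one, Polynomial.eval_pow, Polynomial.eval_neg,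
      Polynomial.eval_X, neg_neg]
    have e1 : ∀ w : Equiv.Perm (Fin n), (χ w : RatFunc ℚ) / (∏ o : Orb w, (1 - q ^ osz w o)) *
        ∏ o : Orb w, (1 - (q ^ (n + k)) ^ osz w o)
        = (χ w : RatFunc ℚ) * PP w (fun j : Fin (n + k) => q ^ (j : ℕ)) := by
      intro w
      have hD : ∏ o : Orb w, (1 - q ^ osz w o) ≠ 0 := by
        rw [Finset.prod_ne_zero_iff]
        intro o _
        rw [hq]
        exact Xpow_ne _ (osz_ne w o)
      rw [← PP_det]
      field_simp
    have e2 : ∏ c ∈ μ.cells, (1 + -q ^ (n + k) * q ^ content c)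
        = ∏ c ∈ μ.cells, (1 - q ^ (n + k + c.2 - c.1)) := by
      refine Finset.prod_congr rfl fun c hc => ?_
      obtain ⟨i, j⟩ := c
      have h2 := YoungDiagram.mem_iff_lt_colLen.1 (show (i, j) ∈ μ from hc)
      have h3 := μ.colLen_anti 0 j (Nat.zero_le _)
      have h5 := colLen_le μ
      rw [neg_mul, ← sub_eq_add_neg]
      congr 1
      rw [← zpow_natCast, ← zpow_natCast, ← zpow_add₀ hq0]
      congr 1
      unfold content
      dsimp only
      omega
    simp only [e1]
    rw [e2]
    apply mul_right_cancel₀ hH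
    rw [h4]
    field_simp

/-- hook–content formula for `g_λ(t,s)`.  `μ` is the Young diagram of
`λ ⊢ n` and `χ` the character of `σ_λ`. -/
theorem statement6 (n : ℕ) (μ : YoungDiagram) (hcard : μ.card = n)
    (χ : Equiv.Perm (Fin n) → ℤ)
    (hχ : IsIrrCharOf n (↑μ.rowLens : Multiset ℕ) (↑μ.transpose.rowLens : Multiset ℕ) χ) :
    ((n.factorial : F))⁻¹ *
        ∑ w : Equiv.Perm (Fin n), ((χ w : ℤ) : F) *
          Matrix.det ((1 : Matrix (Fin n) (Fin n) F) + ss • permM n w) /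
          Matrix.det ((1 : Matrix (Fin n) (Fin n) F) - tt • permM n w)
      = tt ^ nInv μ * (∏ c ∈ μ.cells, (1 + ss * tt ^ content c)) /
          ∏ c ∈ μ.cells, (1 - tt ^ hookLen μ c) := by
  have h := congrArg (algebraMap (Polynomial (RatFunc ℚ)) F)
    (poly_eq n μ hcard χ hχ RatFunc.X rfl)
  simp only [map_sum, map_mul, map_prod, map_sub, map_add, map_one, map_pow, map_neg,
    RatFunc.algebraMap_C, RatFunc.algebraMap_X, map_div₀, map_intCast, map_natCast, map_zpow₀] at h
  have hn : (n.factorial : F) ≠ 0 := by exact_mod_cast n.factorial_ne_zero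
  simp only [det_plus, det_minus]
  rw [inv_mul_eq_iff_eq_mul₀ hn]
  refine Eq.trans (Finset.sum_congr rfl fun w _ => ?_) (h.trans ?_)
  · rw [mul_div_right_comm]
    rfl
  · unfold tt ss
    ring
end
end

section
/- The map σ_λ ↦ [λ×∅] induces an isometric isomorphism between (R(S_n), character pairing) and (R̄(W(B_n)), elliptic pairing); in particular {[λ×∅] : λ ⊢ n} is an orthonormal basis of the space of virtual elliptic representations of W(B_n). -/
set_option maxHeartbeats 1000000
set_option synthInstance.maxHeartbeats 400000

/-!
STATEMENT 8: the map `σ_λ ↦ [λ×∅]` (pullback through `W(B_n) → S_n`) induces an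
isometric isomorphism between `(R(S_n), ⟨,⟩)` and `(R̄(W(B_n)), ⟨,⟩^el)`; in
particular the `[λ×∅]`, `λ ⊢ n`, form an orthonormal basis of the space of virtual
elliptic representations of `W(B_n)` (class functions modulo the radical of the
elliptic pairing).
-/

open scoped BigOperators Classical

noncomputable section

/-- an element of `W(B_n)`. -/
abbrev BElt (n : ℕ) := Equiv.Perm (Fin n) × (Fin n → Bool)

/-- the signed permutation matrix of `p ∈ W(B_n)`, over `ℚ`. -/
def BMatQ (n : ℕ) (p : BElt n) : Matrix (Fin n) (Fin n) ℚ :=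
  Matrix.of fun i j => if p.1 j = i then (if p.2 j then -1 else 1) else 0

/-- conjugacy in `W(B_n)`. -/
def ConjB (n : ℕ) (p p' : BElt n) : Prop :=
  ∃ r : BElt n, BMatQ n r * BMatQ n p = BMatQ n p' * BMatQ n r

/-- class functions on `W(B_n)`. -/
def IsClassFnB (n : ℕ) (σ : BElt n → ℚ) : Prop :=
  ∀ p p' : BElt n, ConjB n p p' → σ p = σ p'

/-- the elliptic pairing of `W(B_n)`, with `det_E(1-w)` on the reflection
representation `E = ℚ^n`. -/
def ellB (n : ℕ) (σ σ' : BElt n → ℚ) : ℚ :=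
  ((Fintype.card (BElt n) : ℚ))⁻¹ *
    ∑ p : BElt n, σ p * σ' p *
      Matrix.det ((1 : Matrix (Fin n) (Fin n) ℚ) - BMatQ n p)

/-- membership in the radical of the elliptic pairing on class functions of `W(B_n)`. -/
def InRadicalB (n : ℕ) (σ : BElt n → ℚ) : Prop :=
  IsClassFnB n σ ∧ ∀ σ' : BElt n → ℚ, IsClassFnB n σ' → ellB n σ σ' = 0

lemma sum_det (n : ℕ) (w : Equiv.Perm (Fin n)) :
    ∑ e : Fin n → Bool, Matrix.det ((1 : Matrix (Fin n) (Fin n) ℚ) - BMatQ n (w, e)) = 2 ^ n := by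
  have h : (2 : ℚ) ^ n = Matrix.det ((2 : ℚ) • (1 : Matrix (Fin n) (Fin n) ℚ)) := by
    simp [Matrix.det_smul]
  rw [h]
  simp_rw [Matrix.det_apply]
  rw [Finset.sum_comm]
  refine Finset.sum_congr rfl fun τ _ => ?_
  rw [← Finset.smul_sum]
  congr 1
  have := Finset.prod_univ_sum (fun _ : Fin n => (Finset.univ : Finset Bool))
    (fun i b => (1 : Matrix (Fin n) (Fin n) ℚ) (τ i) i -
      (if w i = τ i then (if b then -1 else 1) else 0 : ℚ))
  rw [Fintype.piFinset_univ] at this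
  simp only [BMatQ, Matrix.sub_apply, Matrix.of_apply]
  rw [← this]
  refine Finset.prod_congr rfl fun i _ => ?_
  simp only [Fintype.sum_bool, Matrix.smul_apply, smul_eq_mul]
  by_cases hw : w i = τ i
  · simp only [hw, if_true, Bool.false_eq_true, if_false]; ring
  · simp only [hw, if_false]; ring

lemma card_BElt (n : ℕ) : (Fintype.card (BElt n) : ℚ) = n.factorial * 2 ^ n := by
  simp [Fintype.card_perm]

lemma ell_pull (n : ℕ) (a b : Equiv.Perm (Fin n) → ℚ) :
    ellB n (fun p => a p.1) (fun p => b p.1) = pairS n a b := by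
  unfold ellB pairS
  rw [card_BElt, Fintype.sum_prod_type]
  simp_rw [← Finset.mul_sum, sum_det]
  rw [← Finset.sum_mul]
  field_simp

lemma BMat_mul (n : ℕ) (r p : BElt n) (i j : Fin n) :
    (BMatQ n r * BMatQ n p) i j =
      if r.1 (p.1 j) = i then
        (if r.2 (p.1 j) then -1 else 1) * (if p.2 j then -1 else 1) else 0 := by
  simp only [Matrix.mul_apply, BMatQ, Matrix.of_apply]
  rw [Finset.sum_eq_single (p.1 j)]
  · by_cases h : r.1 (p.1 j) = i <;> simp [h]
  · intro b _ hb; rw [if_neg (fun h : p.1 j = b => hb h.symm)]; simp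
  · simp

lemma conjB_fst (n : ℕ) (p p' : BElt n) (h : ConjB n p p') : IsConj p.1 p'.1 := by
  obtain ⟨r, h⟩ := h
  refine isConj_iff.2 ⟨r.1, ?_⟩
  rw [mul_inv_eq_iff_eq_mul]
  ext j : 1
  have := congrFun (congrFun h (r.1 (p.1 j))) j
  rw [BMat_mul, BMat_mul, if_pos rfl] at this
  by_contra hne
  have hne' : ¬ (p'.1 (r.1 j) = r.1 (p.1 j)) := fun h' => hne (by simp [h'])
  rw [if_neg hne'] at this
  split_ifs at this <;> norm_num at this

/-- sign -/
def sg (b : Bool) : ℚ := if b then -1 else 1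

lemma sg_sq (b : Bool) : sg b * sg b = 1 := by cases b <;> simp [sg]

lemma cyc_vec (n : ℕ) (w : Equiv.Perm (Fin n)) (η : Fin n → ℚ) (x : Fin n)
    (hx : ∏ i ∈ Finset.range (Function.minimalPeriod w x), η ((w ^ i) x) = 1) :
    ∃ v : Fin n → ℚ, v x = 1 ∧ ∀ j, v (w j) = η j * v j := by
  set m := Function.minimalPeriod w x with hm
  have hmpos : 0 < m := by
    apply Function.IsPeriodicPt.minimalPeriod_pos (n := orderOf w) (orderOf_pos w)
    unfold Function.IsPeriodicPt Function.IsFixedPt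
    rw [← Equiv.Perm.coe_pow, pow_orderOf_eq_one]; rfl
  have hper : (w ^ m) x = x := by
    rw [Equiv.Perm.coe_pow]; exact Function.iterate_minimalPeriod
  set P : ℕ → ℚ := fun k => ∏ i ∈ Finset.range k, η ((w ^ i) x) with hP
  refine ⟨fun j => ∑ k ∈ Finset.range m, if (w ^ k) x = j then P k else 0, ?_, ?_⟩
  · show ∑ k ∈ Finset.range m, (if (w ^ k) x = x then P k else 0) = 1
    rw [Finset.sum_eq_single 0]
    · simp [hP]
    · intro k hk hk0
      rw [if_neg]
      intro hkx
      have hp : Function.IsPeriodicPt w k x := by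
        unfold Function.IsPeriodicPt Function.IsFixedPt
        rw [← Equiv.Perm.coe_pow]; exact hkx
      have := hp.minimalPeriod_le (Nat.pos_of_ne_zero hk0)
      have := Finset.mem_range.1 hk
      omega
    · intro h; exact absurd (Finset.mem_range.2 hmpos) h
  · intro j
    show ∑ k ∈ Finset.range m, (if (w ^ k) x = w j then P k else 0) =
      η j * ∑ k ∈ Finset.range m, (if (w ^ k) x = j then P k else 0)
    have h1 := Finset.sum_range_succ (fun k => if (w ^ k) x = w j then P k else 0) m
    have h2 := Finset.sum_range_succ' (fun k => if (w ^ k) x = w j then P k else 0) m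
    have h3 : (if (w ^ m) x = w j then P m else 0) = (if (w ^ 0) x = w j then P 0 else 0) := by
      have : P m = P 0 := by simp [hP, hx]
      rw [hper, this]; rfl
    have h4 : ∑ k ∈ Finset.range m, (if (w ^ k) x = w j then P k else 0) =
        ∑ k ∈ Finset.range m, (if (w ^ (k+1)) x = w j then P (k+1) else 0) := by
      linarith
    rw [h4, Finset.mul_sum]
    refine Finset.sum_congr rfl fun k _ => ?_
    have : (w ^ (k+1)) x = w j ↔ (w ^ k) x = j := by
      rw [pow_succ', Equiv.Perm.mul_apply]; exact w.injective.eq_iff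
    simp only [this]
    split_ifs with h
    · simp only [hP]; rw [Finset.prod_range_succ, h]; ring
    · simp

lemma ell_prod (n : ℕ) (w : Equiv.Perm (Fin n)) (e : Fin n → Bool)
    (h : Matrix.det ((1 : Matrix (Fin n) (Fin n) ℚ) - BMatQ n (w, e)) ≠ 0) (x : Fin n) :
    ∏ i ∈ Finset.range (Function.minimalPeriod w x), sg (e ((w ^ i) x)) = -1 := by
  have hsq : (∏ i ∈ Finset.range (Function.minimalPeriod w x), sg (e ((w ^ i) x))) *
     (∏ i ∈ Finset.range (Function.minimalPeriod w x), sg (e ((w ^ i) x))) = 1 := by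
    rw [← Finset.prod_mul_distrib]; simp [sg_sq]
  rcases mul_self_eq_one_iff.1 hsq with h1 | h1
  · exfalso
    obtain ⟨v, hv1, hv⟩ := cyc_vec n w (fun j => sg (e j)) x h1
    apply h
    rw [← Matrix.exists_mulVec_eq_zero_iff]
    refine ⟨v, ?_, ?_⟩
    · intro h0; rw [h0] at hv1; simp at hv1
    · rw [Matrix.sub_mulVec, Matrix.one_mulVec, sub_eq_zero]
      ext i
      obtain ⟨j, rfl⟩ := w.surjective i
      rw [hv]
      simp only [Matrix.mulVec, dotProduct, BMatQ, Matrix.of_apply]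
      rw [Finset.sum_eq_single j]
      · simp [sg]
      · intro b _ hb; rw [if_neg (fun h => hb (w.injective h))]; simp
      · simp
  · exact h1

lemma ell_conj (n : ℕ) (w : Equiv.Perm (Fin n)) (e e' : Fin n → Bool)
    (h : Matrix.det ((1 : Matrix (Fin n) (Fin n) ℚ) - BMatQ n (w, e)) ≠ 0)
    (h' : Matrix.det ((1 : Matrix (Fin n) (Fin n) ℚ) - BMatQ n (w, e')) ≠ 0) :
    ConjB n (w, e) (w, e') := by
  have key : ∀ x, ∃ v : Fin n → ℚ, v x = 1 ∧ ∀ j, v (w j) = (sg (e j) * sg (e' j)) * v j := by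
    intro x
    apply cyc_vec
    rw [Finset.prod_mul_distrib, ell_prod n w e h x, ell_prod n w e' h' x]; norm_num
  choose v hv1 hv using key
  have hsame : ∀ x j, w.SameCycle x j → v x j * v x j = 1 := by
    have hpow : ∀ x (k : ℕ), v x ((w ^ k) x) * v x ((w ^ k) x) = 1 := by
      intro x k
      induction k with
      | zero => simp [hv1]
      | succ k ih =>
        rw [pow_succ', Equiv.Perm.mul_apply, hv]
        have a := sg_sq (e ((w ^ k) x))
        have b := sg_sq (e' ((w ^ k) x))
        calc _ = (sg (e ((w ^ k) x)) * sg (e ((w ^ k) x))) *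
              (sg (e' ((w ^ k) x)) * sg (e' ((w ^ k) x))) *
              (v x ((w ^ k) x) * v x ((w ^ k) x)) := by ring
          _ = 1 := by rw [a, b, ih]; norm_num
    intro x j hj
    obtain ⟨k, _, hk⟩ := hj.exists_pow_eq'
    rw [← hk]; exact hpow x k
  let S := Equiv.Perm.SameCycle.setoid w
  let rep : Fin n → Fin n := fun j => Quotient.out (s := S) (Quotient.mk S j)
  have hrep : ∀ j, w.SameCycle (rep j) j := fun j => Quotient.exact (s := S) (Quotient.out_eq _)
  have hrepw : ∀ j, rep (w j) = rep j := by
    intro j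
    show Quotient.out (s := S) _ = Quotient.out (s := S) _
    congr 1
    apply Quotient.sound (s := S)
    show w.SameCycle (w j) j
    exact Equiv.Perm.sameCycle_apply_left.2 (Equiv.Perm.SameCycle.refl _ _)
  let d : Fin n → ℚ := fun j => v (rep j) j
  have hd : ∀ j, d (w j) = (sg (e j) * sg (e' j)) * d j := by
    intro j; show v (rep (w j)) (w j) = _; rw [hrepw, hv]
  have hd1 : ∀ j, sg (decide (d j = -1)) = d j := by
    intro j
    rcases mul_self_eq_one_iff.1 (hsame _ _ (hrep j)) with h | h
    · have : d j = 1 := h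
      rw [this]; norm_num [sg]
    · have : d j = -1 := h
      rw [this]; norm_num [sg]
  refine ⟨(1, fun j => decide (d j = -1)), ?_⟩
  ext i j
  rw [BMat_mul, BMat_mul]
  simp only [Equiv.Perm.one_apply]
  congr 1
  show sg (decide (d (w j) = -1)) * sg (e j) = sg (e' j) * sg (decide (d j = -1))
  rw [hd1, hd1, hd]
  have := sg_sq (e j)
  linear_combination (sg (e' j) * d j) * this

lemma rep_key {G V : Type} [Group G] [Fintype G] [AddCommGroup V] [Module ℂ V]
    [FiniteDimensional ℂ V] (ρ : Representation ℂ G V)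
    (h1 : Module.finrank ℂ (Representation.IntertwiningMap ρ ρ) = 1)
    (A B : V →ₗ[ℂ] V) (hA : LinearMap.trace ℂ V A ≠ 0) (hB : B ≠ 0) :
    ∃ g, B * ρ g * A ≠ 0 := by
  by_contra hcon
  push Not at hcon
  set T : V →ₗ[ℂ] V := ∑ g : G, ρ g * A * ρ g⁻¹ with hT
  have hcomm : ∀ g, T * ρ g = ρ g * T := by
    intro g
    rw [hT, Finset.sum_mul, Finset.mul_sum]
    rw [← Equiv.sum_comp (Equiv.mulLeft g) (fun x => ρ x * A * ρ x⁻¹ * ρ g)]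
    refine Finset.sum_congr rfl fun x _ => ?_
    simp only [Equiv.coe_mulLeft, mul_inv_rev, map_mul, mul_assoc]
    rw [← map_mul ρ g⁻¹ g]; simp
  let T' : Representation.IntertwiningMap ρ ρ := ⟨T, fun g => hcomm g⟩
  have htr : LinearMap.trace ℂ V T = Fintype.card G * LinearMap.trace ℂ V A := by
    rw [hT, map_sum]
    have : ∀ g : G, LinearMap.trace ℂ V (ρ g * A * ρ g⁻¹) = LinearMap.trace ℂ V A := by
      intro g
      rw [LinearMap.trace_mul_comm, ← mul_assoc, ← map_mul]; simp
    simp [this]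
  have hTne : T ≠ 0 := by
    intro h0
    rw [h0, map_zero] at htr
    have : (Fintype.card G : ℂ) ≠ 0 := by exact_mod_cast Fintype.card_ne_zero
    exact (mul_ne_zero this hA) htr.symm
  have hT'ne : T' ≠ 0 := by
    intro h0
    exact hTne (congrArg (fun f => f.toLinearMap) h0)
  obtain ⟨c, hc⟩ := (finrank_eq_one_iff_of_nonzero' T' hT'ne).1 h1 1
  have hc' : c • T = 1 := congrArg (fun f => f.toLinearMap) hc
  apply hB
  calc B = B * (c • T) := by rw [hc', mul_one]
    _ = c • ∑ g : G, (B * ρ g * A) * ρ g⁻¹ := by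
        rw [mul_smul_comm, hT, Finset.mul_sum]; simp only [mul_assoc]
    _ = 0 := by simp [hcon]

lemma frob (n : ℕ) (χ : Equiv.Perm (Fin n) → ℚ)
    (hc : ∀ g w, χ (g⁻¹ * w * g) = χ w) (H : Subgroup (Equiv.Perm (Fin n)))
    (ψ : Equiv.Perm (Fin n) → ℚ) (h : pairS n χ (indCF H ψ) ≠ 0) :
    ∑ w, (if w ∈ H then ψ w else 0) * χ w ≠ 0 := by
  intro h0
  apply h
  unfold pairS indCF
  have : ∀ g : Equiv.Perm (Fin n),
      ∑ w, χ w * (if g⁻¹ * w * g ∈ H then ψ (g⁻¹ * w * g) else 0) = 0 := by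
    intro g
    refine Eq.trans ?_ h0
    refine Eq.trans ?_ (Equiv.sum_comp (MulAut.conj g⁻¹).toEquiv _)
    refine Finset.sum_congr rfl fun w _ => ?_
    simp only [MulEquiv.toEquiv_eq_coe, EquivLike.coe_coe, MulAut.conj_apply, inv_inv]
    rw [hc, mul_comm]
  have h2 : ∑ w, χ w * ∑ g, (if g⁻¹ * w * g ∈ H then ψ (g⁻¹ * w * g) else 0) = 0 := by
    simp_rw [Finset.mul_sum]
    rw [Finset.sum_comm]
    simp only [this, Finset.sum_const_zero]
  rw [mul_eq_zero]; right
  refine Eq.trans ?_ ((congrArg (fun z => ((Nat.card H : ℚ))⁻¹ * z) h2).trans (mul_zero _))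
  rw [Finset.mul_sum]
  refine Finset.sum_congr rfl fun w _ => ?_
  ring

/-- isotypic projector (up to scale) -/
def opp {G V : Type} [Group G] [Fintype G] [AddCommGroup V] [Module ℂ V]
    (ρ : Representation ℂ G V) (H : Subgroup G) (ψ : G → ℚ) : V →ₗ[ℂ] V :=
  ∑ h : G, ((if h ∈ H then ψ h else 0 : ℚ) : ℂ) • ρ h

lemma opp_trace {G V : Type} [Group G] [Fintype G] [AddCommGroup V] [Module ℂ V]
    (ρ : Representation ℂ G V) (H : Subgroup G) (ψ χ : G → ℚ)
    (hχ : ∀ g, LinearMap.trace ℂ V (ρ g) = (χ g : ℂ)) :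
    LinearMap.trace ℂ V (opp ρ H ψ) = ((∑ w, (if w ∈ H then ψ w else 0) * χ w : ℚ) : ℂ) := by
  simp only [opp, map_sum, map_smul, hχ, smul_eq_mul]
  push_cast; rfl

lemma opp_left {G V : Type} [Group G] [Fintype G] [AddCommGroup V] [Module ℂ V]
    (ρ : Representation ℂ G V) (H : Subgroup G) (t : G) (ht : t ∈ H) :
    ρ t * opp ρ H (fun _ => 1) = opp ρ H (fun _ => 1) := by
  unfold opp
  rw [Finset.mul_sum, ← Equiv.sum_comp (Equiv.mulLeft t)
    (fun h => ((if h ∈ H then (1 : ℚ) else 0 : ℚ) : ℂ) • ρ h)]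
  refine Finset.sum_congr rfl fun x _ => ?_
  simp only [Equiv.coe_mulLeft, H.mul_mem_cancel_left ht, map_mul, mul_smul_comm]

lemma opp_right {G V : Type} [Group G] [Fintype G] [AddCommGroup V] [Module ℂ V]
    (ρ : Representation ℂ G V) (H : Subgroup G) (ψ : G → ℚ) (t : G) (ht : t ∈ H)
    (hψ : ∀ x, ψ (x * t) = - ψ x) :
    opp ρ H ψ * ρ t = - opp ρ H ψ := by
  unfold opp
  rw [Finset.sum_mul, ← Equiv.sum_comp (Equiv.mulRight t)
    (fun h => ((if h ∈ H then ψ h else 0 : ℚ) : ℂ) • ρ h), ← Finset.sum_neg_distrib]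
  refine Finset.sum_congr rfl fun x _ => ?_
  simp only [Equiv.coe_mulRight, H.mul_mem_cancel_right ht, map_mul, smul_mul_assoc, hψ]
  rw [← neg_smul]
  congr 1
  split_ifs <;> simp

lemma young_inj {V : Type} (n : ℕ) [AddCommGroup V] [Module ℂ V] [FiniteDimensional ℂ V]
    (ρ : Representation ℂ (Equiv.Perm (Fin n)) V)
    (h1 : Module.finrank ℂ (Representation.IntertwiningMap ρ ρ) = 1)
    (χ : Equiv.Perm (Fin n) → ℚ)
    (hχ : ∀ g, LinearMap.trace ℂ V (ρ g) = (χ g : ℂ))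
    (hc : ∀ g w, χ (g⁻¹ * w * g) = χ w) (f f' : Fin n → ℕ)
    (hf : pairS n χ (indCF (youngSubgroup n f) (fun _ => 1)) ≠ 0)
    (hf' : pairS n χ (indCF (youngSubgroup n f')
      (fun w => ((Equiv.Perm.sign w : ℤ) : ℚ))) ≠ 0) :
    ∃ g : Equiv.Perm (Fin n), ∀ i j, f (g i) = f (g j) → f' i = f' j → i = j := by
  have hA := frob n χ hc _ _ hf
  have hB := frob n χ hc _ _ hf'
  set A := opp ρ (youngSubgroup n f) (fun _ => 1) with hAdef
  set B := opp ρ (youngSubgroup n f') (fun w => ((Equiv.Perm.sign w : ℤ) : ℚ)) with hBdef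
  have hA' : LinearMap.trace ℂ V A ≠ 0 := by
    rw [hAdef, opp_trace ρ _ _ χ hχ]; exact_mod_cast hA
  have hB' : B ≠ 0 := by
    intro h0
    have : LinearMap.trace ℂ V B ≠ 0 := by
      rw [hBdef, opp_trace ρ _ _ χ hχ]; exact_mod_cast hB
    rw [h0, map_zero] at this
    exact this rfl
  obtain ⟨g, hg⟩ := rep_key ρ h1 A B hA' hB'
  refine ⟨g⁻¹, fun i j hij hij' => ?_⟩
  by_contra hne
  apply hg
  have swap_mem : ∀ (F : Fin n → ℕ) (a b : Fin n), F a = F b →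
      Equiv.swap a b ∈ youngSubgroup n F := by
    intro F a b hab k
    rcases eq_or_ne k a with rfl | hka
    · rw [Equiv.swap_apply_left, hab]
    · rcases eq_or_ne k b with rfl | hkb
      · rw [Equiv.swap_apply_right, hab]
      · rw [Equiv.swap_apply_of_ne_of_ne hka hkb]
  have e1 := opp_left ρ _ _ (swap_mem f (g⁻¹ i) (g⁻¹ j) hij)
  have e2 := opp_right ρ _ (fun w => ((Equiv.Perm.sign w : ℤ) : ℚ)) _ (swap_mem f' i j hij')
    (by intro x; simp [Equiv.Perm.sign_swap hne])
  rw [← hAdef] at e1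
  rw [← hBdef] at e2
  have e3 : g * Equiv.swap (g⁻¹ i) (g⁻¹ j) = Equiv.swap i j * g := by
    rw [Equiv.mul_swap_eq_swap_mul]; simp
  have e4 : B * ρ g * A = - (B * ρ g * A) := by
    calc B * ρ g * A = B * ρ g * (ρ (Equiv.swap (g⁻¹ i) (g⁻¹ j)) * A) := by rw [e1]
      _ = B * (ρ g * ρ (Equiv.swap (g⁻¹ i) (g⁻¹ j))) * A := by simp only [mul_assoc]
      _ = B * ρ (Equiv.swap i j) * ρ g * A := by rw [← map_mul, e3, map_mul]; simp only [mul_assoc]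
      _ = - (B * ρ g * A) := by rw [e2]; simp only [neg_mul]
  have e5 : (2 : ℂ) • (B * ρ g * A) = 0 := by
    rw [two_smul]; nth_rewrite 1 [e4]; simp
  exact (smul_eq_zero.1 e5).resolve_left two_ne_zero

lemma exists_fibers (n N : ℕ) (c : ℕ → ℕ) (h : ∑ j ∈ Finset.range N, c j = n) :
    ∃ f : Fin n → ℕ,
      (∀ j, (Finset.univ.filter (fun i => f i = j)).card = if j < N then c j else 0) ∧
      fiberSizes n f = ((Finset.range N).val.map c).filter (fun a => 0 < a) := by
  have hcard : Fintype.card (Fin n) = Fintype.card (Σ j : Fin N, Fin (c j)) := by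
    simp [← h, Finset.sum_range]
  let e := Fintype.equivOfCardEq hcard
  have h1 : ∀ j, (Finset.univ.filter (fun i => ((e i).1 : ℕ) = j)).card =
      if j < N then c j else 0 := by
    intro j
    split_ifs with hj
    · rw [← Fintype.card_fin (c j), ← Finset.card_univ]
      symm
      apply Finset.card_bij (fun a _ => e.symm ⟨⟨j, hj⟩, a⟩)
      · intro a _; simp
      · intro a _ b _ hab; simpa using hab
      · intro b hb
        have hb' : ((e b).1 : ℕ) = j := by simpa using hb
        subst hb'
        exact ⟨(e b).2, Finset.mem_univ _, by simp⟩
    · rw [Finset.card_eq_zero, Finset.filter_eq_empty_iff]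
      intro i _ hi
      exact hj (hi ▸ (e i).1.2)
  refine ⟨fun i => (e i).1, h1, ?_⟩
  unfold fiberSizes
  have himg : Finset.univ.image (fun i => ((e i).1 : ℕ)) =
      (Finset.range N).filter (fun j => 0 < c j) := by
    ext j
    simp only [Finset.mem_image, Finset.mem_univ, true_and, Finset.mem_filter, Finset.mem_range]
    have hj := h1 j
    constructor
    · rintro ⟨i, hi⟩
      have hlt : j < N := hi ▸ (e i).1.2
      refine ⟨hlt, ?_⟩
      rw [if_pos hlt] at hj
      rw [← hj, Finset.card_pos]
      exact ⟨i, by simp [hi]⟩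
    · rintro ⟨hlt, hc⟩
      rw [if_pos hlt] at hj
      rw [← hj, Finset.card_pos] at hc
      obtain ⟨i, hi⟩ := hc
      exact ⟨i, by simpa using hi⟩
  rw [himg, Multiset.filter_map, Finset.filter_val]
  refine Multiset.map_congr rfl fun j hj => ?_
  rw [Multiset.mem_filter] at hj
  rw [h1, if_pos]
  simpa using hj.1

lemma sum_card_filter (m : Multiset ℕ) (t : ℕ) :
    ∑ j ∈ Finset.range t, Multiset.card (m.filter (fun a => j < a)) =
      (m.map (fun a => min a t)).sum := by
  induction m using Multiset.induction_on with
  | empty => simp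
  | cons a m ih =>
    simp only [Multiset.filter_cons, Multiset.card_add, Finset.sum_add_distrib, ih,
      Multiset.map_cons, Multiset.sum_cons]
    congr 1
    have : ∀ j, Multiset.card (if j < a then ({a} : Multiset ℕ) else 0) = if j < a then 1 else 0 := by
      intro j; split_ifs <;> simp
    simp only [this]
    rw [← Finset.sum_filter, Finset.sum_const, smul_eq_mul, mul_one]
    have : (Finset.range t).filter (fun j => j < a) = Finset.range (min a t) := by
      ext j; simp; omega
    rw [this, Finset.card_range]

lemma exists_f (n : ℕ) (lam : Nat.Partition n) : ∃ f : Fin n → ℕ, fiberSizes n f = lam.parts := by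
  obtain ⟨l, hl⟩ := Quot.exists_rep lam.parts
  have hl' : (l : Multiset ℕ) = lam.parts := hl
  have hmap : (Finset.range l.length).val.map (fun j => l.getD j 0) = lam.parts := by
    rw [← hl']
    show ((List.map _ (List.range l.length) : List ℕ) : Multiset ℕ) = _
    congr 1
    apply List.ext_getElem
    · simp
    · intro i h1 h2; simp [h2]
  obtain ⟨f, -, hf⟩ := exists_fibers n l.length (fun j => l.getD j 0) (by
    show ((Finset.range l.length).val.map _).sum = n
    rw [hmap, lam.parts_sum])
  refine ⟨f, ?_⟩
  rw [hf, hmap, Multiset.filter_eq_self]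
  intro a ha
  exact lam.parts_pos ha

lemma part_le (n : ℕ) (lam : Nat.Partition n) (a : ℕ) (ha : a ∈ lam.parts) : a ≤ n := by
  have := Multiset.le_sum_of_mem ha
  rwa [lam.parts_sum] at this

lemma exists_f' (n : ℕ) (lam : Nat.Partition n) : ∃ f : Fin n → ℕ,
    (∀ j, (Finset.univ.filter (fun i => f i = j)).card =
      Multiset.card (lam.parts.filter (fun a => j < a))) ∧
    fiberSizes n f = conjParts n lam.parts := by
  obtain ⟨f, hf1, hf2⟩ := exists_fibers n n
    (fun j => Multiset.card (lam.parts.filter (fun a => j < a))) (by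
      rw [sum_card_filter]
      have : lam.parts.map (fun a => min a n) = lam.parts.map id :=
        Multiset.map_congr rfl fun a ha => min_eq_left (part_le n lam a ha)
      rw [this, Multiset.map_id, lam.parts_sum])
  refine ⟨f, fun j => ?_, hf2⟩
  rw [hf1]
  split_ifs with hj
  · rfl
  · symm
    rw [Multiset.card_eq_zero, Multiset.filter_eq_nil]
    intro a ha h
    have := part_le n lam a ha
    omega

lemma dom (n : ℕ) (f f' : Fin n → ℕ) (g : Equiv.Perm (Fin n))
    (hg : ∀ i j, f (g i) = f (g j) → f' i = f' j → i = j) (t : ℕ) :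
    ∑ j ∈ Finset.range t, (Finset.univ.filter (fun i => f' i = j)).card ≤
      ((fiberSizes n f).map (fun a => min a t)).sum := by
  have h1 : ∑ j ∈ Finset.range t, (Finset.univ.filter (fun i => f' i = j)).card =
      (Finset.univ.filter (fun i => f' i < t)).card := by
    rw [Finset.card_eq_sum_card_fiberwise (f := f') (t := Finset.range t)]
    · refine Finset.sum_congr rfl fun j hj => ?_
      congr 1
      ext i
      have := Finset.mem_range.1 hj
      simp only [Finset.mem_filter, Finset.mem_univ, true_and]
      constructor
      · intro h; exact ⟨by omega, h⟩
      · intro h; exact h.2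
    · intro i hi; simpa using hi
  rw [h1, fiberSizes, Multiset.map_map]
  rw [Finset.card_eq_sum_card_fiberwise (f := fun i => f (g i)) (t := Finset.univ.image f)]
  · show _ ≤ ∑ a ∈ Finset.univ.image f, _
    refine Finset.sum_le_sum fun a _ => ?_
    refine le_min ?_ ?_
    · apply Finset.card_le_card_of_injOn g
      · intro i hi
        simp only [Finset.coe_filter, Finset.mem_filter, Finset.mem_univ, true_and,
          Set.mem_ofPred_eq] at hi ⊢
        exact hi.2
      · exact g.injective.injOn
    · conv_rhs => rw [← Finset.card_range t]
      apply Finset.card_le_card_of_injOn f'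
      · intro i hi
        simp only [Finset.coe_filter, Finset.mem_filter, Finset.mem_univ, true_and,
          Set.mem_ofPred_eq] at hi
        simpa using hi.1
      · intro i hi j hj hij
        simp only [Finset.coe_filter, Finset.mem_filter, Finset.mem_univ, true_and,
          Set.mem_ofPred_eq] at hi hj
        exact hg i j (hi.2.trans hj.2.symm) hij
  · intro i _; simp

lemma parts_eq (n : ℕ) (lam mu : Nat.Partition n)
    (h : ∀ t, (lam.parts.map (fun a => min a t)).sum = (mu.parts.map (fun a => min a t)).sum) :
    lam = mu := by
  have h1 : ∀ t, Multiset.card (lam.parts.filter (fun a => t < a)) =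
      Multiset.card (mu.parts.filter (fun a => t < a)) := by
    intro t
    have a1 := h t
    have a2 := h (t + 1)
    rw [← sum_card_filter, ← sum_card_filter] at a1 a2
    rw [Finset.sum_range_succ, Finset.sum_range_succ] at a2
    omega
  have h2 : ∀ (m : Multiset ℕ) (t : ℕ), Multiset.card (m.filter (fun a => t < a)) =
      m.count (t + 1) + Multiset.card (m.filter (fun a => t + 1 < a)) := by
    intro m t
    induction m using Multiset.induction_on with
    | empty => simp
    | cons a m ih =>
      simp only [Multiset.filter_cons, Multiset.card_add, ih, Multiset.count_cons]
      split_ifs <;> simp <;> omega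
  apply Nat.Partition.ext
  ext k
  cases k with
  | zero =>
    rw [Multiset.count_eq_zero_of_notMem, Multiset.count_eq_zero_of_notMem]
    · intro h0; exact absurd (mu.parts_pos h0) (lt_irrefl _)
    · intro h0; exact absurd (lam.parts_pos h0) (lt_irrefl _)
  | succ k =>
    have b1 := h2 lam.parts k
    have b2 := h2 mu.parts k
    rw [h1 k, h1 (k + 1)] at b1
    omega

lemma inv_conj' (n : ℕ) (w : Equiv.Perm (Fin n)) : IsConj w w⁻¹ := by
  rw [Equiv.Perm.isConj_iff_cycleType_eq, Equiv.Perm.cycleType_inv]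

lemma char_cl (n : ℕ) (V : FDRep ℂ (Equiv.Perm (Fin n))) (χ : Equiv.Perm (Fin n) → ℤ)
    (h : ∀ g, V.character g = (χ g : ℂ)) (w w' : Equiv.Perm (Fin n)) (hc : IsConj w w') :
    χ w = χ w' := by
  obtain ⟨c, rfl⟩ := isConj_iff.1 hc
  have := FDRep.char_conj V w c
  rw [h, h] at this
  exact_mod_cast this.symm

lemma char_pair (n : ℕ) (V W : FDRep ℂ (Equiv.Perm (Fin n))) (χ χ' : Equiv.Perm (Fin n) → ℤ)
    (h : ∀ g, V.character g = (χ g : ℂ)) (h' : ∀ g, W.character g = (χ' g : ℂ)) :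
    pairS n (fun w => (χ w : ℚ)) (fun w => (χ' w : ℚ)) =
      Module.finrank ℂ (Representation.IntertwiningMap W.ρ V.ρ) := by
  have : Invertible (Nat.card (Equiv.Perm (Fin n)) : ℂ) :=
    invertibleOfNonzero (by exact_mod_cast Nat.card_pos.ne')
  have := Representation.card_inv_mul_sum_char_mul_char_eq_finrank W.ρ V.ρ
  have e1 : ∀ g, Representation.character V.ρ g = (χ g : ℂ) := h
  have e2 : ∀ g, Representation.character W.ρ g = (χ' g : ℂ) := h'
  simp only [e1, e2] at this
  have e3 : ∀ g, χ' g⁻¹ = χ' g := fun g => (char_cl n W χ' h' _ _ (inv_conj' n g)).symm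
  simp only [e3] at this
  have hcard : Nat.card (Equiv.Perm (Fin n)) = n.factorial := by
    rw [Nat.card_eq_fintype_card, Fintype.card_perm, Fintype.card_fin]
  rw [hcard] at this
  unfold pairS
  apply Rat.cast_injective (α := ℂ)
  push_cast
  exact this

lemma irr_le (n : ℕ) (χ : Equiv.Perm (Fin n) → ℤ) (lam mu : Nat.Partition n)
    (h1 : IsIrrCharOf n lam.parts (conjParts n lam.parts) χ)
    (h2 : IsIrrCharOf n mu.parts (conjParts n mu.parts) χ) (t : ℕ) :
    (mu.parts.map (fun a => min a t)).sum ≤ (lam.parts.map (fun a => min a t)).sum := by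
  obtain ⟨⟨V, hV⟩, hn, hA, -⟩ := h1
  obtain ⟨-, -, -, hB⟩ := h2
  obtain ⟨f, hf⟩ := exists_f n lam
  obtain ⟨f', hf', hf''⟩ := exists_f' n mu
  have hfin : Module.finrank ℂ (Representation.IntertwiningMap V.ρ V.ρ) = 1 := by
    have := char_pair n V V χ χ hV hV
    rw [hn] at this
    exact_mod_cast this.symm
  obtain ⟨g, hg⟩ := young_inj n V.ρ hfin (fun w => (χ w : ℚ))
    (fun g => by have := hV g; simp only [Rat.cast_intCast]; exact this)
    (fun g w => by
      have : IsConj w (g⁻¹ * w * g) := isConj_iff.2 ⟨g⁻¹, by simp⟩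
      simp only [char_cl n V χ hV _ _ this]) f f' (hA f hf) (hB f' hf'')
  have := dom n f f' g hg t
  simp only [hf', hf] at this
  rwa [sum_card_filter] at this

lemma orth (n : ℕ)
    (χ : Nat.Partition n → (Equiv.Perm (Fin n) → ℤ))
    (hχ : ∀ lam : Nat.Partition n, IsIrrCharOf n lam.parts (conjParts n lam.parts) (χ lam))
    (lam mu : Nat.Partition n) :
    pairS n (fun w => ((χ lam) w : ℚ)) (fun w => ((χ mu) w : ℚ)) = if lam = mu then 1 else 0 := by
  split_ifs with heq
  · subst heq; exact (hχ lam).2.1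
  · by_contra hne
    apply heq
    have hl := hχ lam
    have hm := hχ mu
    obtain ⟨⟨V, hV⟩, hn, -⟩ := hχ lam
    obtain ⟨⟨W, hW⟩, hn', -⟩ := hχ mu
    have hp := char_pair n V W _ _ hV hW
    rw [hp] at hne
    have h1 : (1 : ℚ) ≤ Module.finrank ℂ (Representation.IntertwiningMap W.ρ V.ρ) := by
      have : Module.finrank ℂ (Representation.IntertwiningMap W.ρ V.ρ) ≠ 0 := by exact_mod_cast hne
      exact_mod_cast Nat.one_le_iff_ne_zero.2 this
    rw [← hp] at h1
    have hfp : (0 : ℚ) < ((n.factorial : ℚ))⁻¹ := by positivity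
    have hsum : ((n.factorial : ℚ))⁻¹ * ∑ w, ((χ lam w : ℚ) - χ mu w) ^ 2 ≤ 0 := by
      have : ((n.factorial : ℚ))⁻¹ * ∑ w, ((χ lam w : ℚ) - χ mu w) ^ 2 =
          pairS n (fun w => ((χ lam) w : ℚ)) (fun w => ((χ lam) w : ℚ)) +
          pairS n (fun w => ((χ mu) w : ℚ)) (fun w => ((χ mu) w : ℚ)) -
          2 * pairS n (fun w => ((χ lam) w : ℚ)) (fun w => ((χ mu) w : ℚ)) := by
        unfold pairS
        have : ∀ w, ((χ lam w : ℚ) - χ mu w) ^ 2 = (χ lam w : ℚ) * χ lam w +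
          (χ mu w : ℚ) * χ mu w - 2 * ((χ lam w : ℚ) * χ mu w) := fun w => by ring
        simp only [this, Finset.sum_sub_distrib, Finset.sum_add_distrib, ← Finset.mul_sum]
        ring
      rw [this, hn, hn']; linarith
    have hz : ∑ w, ((χ lam w : ℚ) - χ mu w) ^ 2 = 0 := by
      apply le_antisymm
      · by_contra hlt
        push Not at hlt
        have := mul_pos hfp hlt
        linarith
      · exact Finset.sum_nonneg fun w _ => sq_nonneg _
    have heqχ : χ lam = χ mu := by
      ext w
      have := (Finset.sum_eq_zero_iff_of_nonneg (fun w _ => sq_nonneg _)).1 hz w (Finset.mem_univ _)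
      have := pow_eq_zero_iff (two_ne_zero) |>.1 this
      have := sub_eq_zero.1 this
      exact_mod_cast this
    rw [← heqχ] at hm
    exact parts_eq n lam mu fun t => le_antisymm
      (irr_le n (χ lam) mu lam hm hl t) (irr_le n (χ lam) lam mu hl hm t)

lemma span_cl (n : ℕ)
    (χ : Nat.Partition n → (Equiv.Perm (Fin n) → ℤ))
    (hχ : ∀ lam : Nat.Partition n, IsIrrCharOf n lam.parts (conjParts n lam.parts) (χ lam))
    (φ : Equiv.Perm (Fin n) → ℚ) (hφ : ∀ w w', IsConj w w' → φ w = φ w') :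
    ∃ c : Nat.Partition n → ℚ, ∀ w, φ w = ∑ lam, c lam * (χ lam w : ℚ) := by
  let π : Equiv.Perm (Fin n) → (Fintype.card (Fin n)).Partition := Equiv.Perm.partition
  have fac : ∀ ψ : Equiv.Perm (Fin n) → ℚ, (∀ w w', IsConj w w' → ψ w = ψ w') →
      ∃ F : (Fintype.card (Fin n)).Partition → ℚ, ∀ w, ψ w = F (π w) := by
    intro ψ hψ
    refine ⟨fun q => if h : ∃ w, π w = q then ψ h.choose else 0, fun w => ?_⟩
    have hex : ∃ w', π w' = π w := ⟨w, rfl⟩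
    simp only [dif_pos hex]
    exact hψ _ _ (Equiv.Perm.partition_eq_of_isConj.2 hex.choose_spec.symm)
  have hcl : ∀ lam, ∀ w w', IsConj w w' → (χ lam w : ℚ) = χ lam w' := by
    intro lam w w' h
    obtain ⟨⟨V, hV⟩, -⟩ := hχ lam
    rw [char_cl n V _ hV w w' h]
  choose F hF using fun lam => fac (fun w => (χ lam w : ℚ)) (hcl lam)
  obtain ⟨Φ, hΦ⟩ := fac φ hφ
  have hli : LinearIndependent ℚ F := by
    rw [Fintype.linearIndependent_iff]
    intro c hc mu
    have h0 : ∀ w, ∑ lam, c lam * (χ lam w : ℚ) = 0 := by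
      intro w
      have := congrFun hc (π w)
      simpa [← hF] using this
    have h1 : ∑ lam, c lam * pairS n (fun w => ((χ lam) w : ℚ)) (fun w => ((χ mu) w : ℚ)) = 0 := by
      unfold pairS
      calc _ = ((n.factorial : ℚ))⁻¹ * ∑ w, (∑ lam, c lam * (χ lam w : ℚ)) * χ mu w := by
            simp only [Finset.sum_mul]
            rw [Finset.sum_comm, Finset.mul_sum]
            refine Finset.sum_congr rfl fun lam _ => ?_
            simp only [Finset.mul_sum]
            refine Finset.sum_congr rfl fun w _ => ?_
            ring
        _ = 0 := by simp [h0]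
    simpa [orth n χ hχ] using h1
  have hcard : Fintype.card (Nat.Partition n) =
      Module.finrank ℚ ((Fintype.card (Fin n)).Partition → ℚ) := by
    rw [Module.finrank_fintype_fun_eq_card]
    have : ∀ m, m = n → Fintype.card (Nat.Partition n) = Fintype.card (Nat.Partition m) := by
      rintro m rfl; rfl
    exact this _ (Fintype.card_fin n)
  have hspan := hli.span_eq_top_of_card_eq_finrank' hcard
  have hmem : Φ ∈ Submodule.span ℚ (Set.range F) := by rw [hspan]; trivial
  obtain ⟨c, hc⟩ := (Submodule.mem_span_range_iff_exists_fun ℚ).1 hmem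
  refine ⟨c, fun w => ?_⟩
  rw [hΦ, ← hc]
  simp [← hF]

lemma perm_conj (n : ℕ) (v w : Equiv.Perm (Fin n)) (e : Fin n → Bool) :
    BMatQ n (v, fun _ => false) * BMatQ n (w, e) =
      BMatQ n (v * w * v⁻¹, e ∘ v.symm) * BMatQ n (v, fun _ => false) := by
  ext i j
  rw [BMat_mul, BMat_mul]
  simp

lemma det_conj (n : ℕ) (v w : Equiv.Perm (Fin n)) (e : Fin n → Bool) :
    Matrix.det ((1 : Matrix (Fin n) (Fin n) ℚ) - BMatQ n (v * w * v⁻¹, e ∘ v.symm)) =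
    Matrix.det ((1 : Matrix (Fin n) (Fin n) ℚ) - BMatQ n (w, e)) := by
  have h := perm_conj n v w e
  have h1 : BMatQ n (v⁻¹, fun _ => false) * BMatQ n (v, fun _ => false) = 1 := by
    ext i j
    rw [BMat_mul]
    simp [Matrix.one_apply, eq_comm]
  have hd : Matrix.det (BMatQ n (v, fun _ => false)) ≠ 0 := by
    intro h0
    have := congrArg Matrix.det h1
    rw [Matrix.det_mul, h0] at this
    simp at this
  have h2 : (1 - BMatQ n (v * w * v⁻¹, e ∘ v.symm)) * BMatQ n (v, fun _ => false) =
      BMatQ n (v, fun _ => false) * (1 - BMatQ n (w, e)) := by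
    rw [sub_mul, mul_sub, h, one_mul, mul_one]
  have h3 := congrArg Matrix.det h2
  rw [Matrix.det_mul, Matrix.det_mul, mul_comm] at h3
  exact mul_left_cancel₀ hd h3

lemma spanB (n : ℕ)
    (χ : Nat.Partition n → (Equiv.Perm (Fin n) → ℤ))
    (hχ : ∀ lam : Nat.Partition n, IsIrrCharOf n lam.parts (conjParts n lam.parts) (χ lam))
    (σ : BElt n → ℚ) (hσ : IsClassFnB n σ) :
    ∃ c : Nat.Partition n → ℚ,
      InRadicalB n (fun p => σ p - ∑ lam : Nat.Partition n, c lam * ((χ lam) p.1 : ℚ)) := by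
  let D : BElt n → ℚ := fun p => Matrix.det ((1 : Matrix (Fin n) (Fin n) ℚ) - BMatQ n p)
  let φ : Equiv.Perm (Fin n) → ℚ := fun w => (2 ^ n)⁻¹ * ∑ e : Fin n → Bool, σ (w, e) * D (w, e)
  have hφ : ∀ w w', IsConj w w' → φ w = φ w' := by
    intro w w' h
    obtain ⟨v, rfl⟩ := isConj_iff.1 h
    show (2 ^ n)⁻¹ * _ = (2 ^ n)⁻¹ * _
    congr 1
    refine Eq.trans ?_ (Equiv.sum_comp (v.symm.symm.arrowCongr (Equiv.refl Bool)) _)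
    refine Finset.sum_congr rfl fun e _ => ?_
    have he : (v.symm.symm.arrowCongr (Equiv.refl Bool)) e = e ∘ v.symm := rfl
    rw [he]
    show _ = σ _ * Matrix.det _
    rw [det_conj, ← hσ (w, e) (v * w * v⁻¹, e ∘ v.symm) ⟨_, perm_conj n v w e⟩]
  have hell : ∀ p, D p ≠ 0 → σ p = φ p.1 := by
    rintro ⟨w, e⟩ hp
    have : ∀ e', σ (w, e') * D (w, e') = σ (w, e) * D (w, e') := by
      intro e'
      by_cases h0 : D (w, e') = 0
      · rw [h0, mul_zero, mul_zero]
      · rw [hσ _ _ (ell_conj n w e' e h0 hp)]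
    show _ = (2 ^ n)⁻¹ * ∑ e' : Fin n → Bool, σ (w, e') * D (w, e')
    simp only [this]
    rw [← Finset.mul_sum]
    show _ = (2 ^ n)⁻¹ * (_ * ∑ e' : Fin n → Bool, Matrix.det _)
    rw [sum_det]
    field_simp
  obtain ⟨c, hc⟩ := span_cl n χ hχ φ hφ
  refine ⟨c, ?_, ?_⟩
  · intro p p' h
    have h1 := hφ _ _ (conjB_fst n p p' h)
    rw [hc, hc] at h1
    simp only [h1, hσ p p' h]
  · intro σ' _
    unfold ellB
    rw [mul_eq_zero]; right
    refine Finset.sum_eq_zero fun p _ => ?_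
    by_cases h0 : D p = 0
    · show _ * D p = 0
      rw [h0, mul_zero]
    · simp only [hell p h0, hc, sub_self, zero_mul]

theorem statement8 (n : ℕ)
    (χ : Nat.Partition n → (Equiv.Perm (Fin n) → ℤ))
    (hχ : ∀ lam : Nat.Partition n, IsIrrCharOf n lam.parts (conjParts n lam.parts) (χ lam)) :
    -- the map is an isometry: the elliptic pairing of the pullbacks [λ×∅]
    -- equals the character pairing on S_n …
    (∀ lam mu : Nat.Partition n,
        ellB n (fun p => ((χ lam) p.1 : ℚ)) (fun p => ((χ mu) p.1 : ℚ))
          = pairS n (fun w => ((χ lam) w : ℚ)) (fun w => ((χ mu) w : ℚ))) ∧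
    -- … and the [λ×∅] are orthonormal …
    (∀ lam mu : Nat.Partition n,
        ellB n (fun p => ((χ lam) p.1 : ℚ)) (fun p => ((χ mu) p.1 : ℚ))
          = if lam = mu then 1 else 0) ∧
    -- … and they span the space of virtual elliptic representations: every class
    -- function on W(B_n) is congruent, modulo the radical of the elliptic pairing,
    -- to a linear combination of the [λ×∅].  (Together with orthonormality this says
    -- σ_λ ↦ [λ×∅] induces an isometric isomorphism R(S_n) ≅ R̄(W(B_n)).)
    (∀ σ : BElt n → ℚ, IsClassFnB n σ →
        ∃ c : Nat.Partition n → ℚ,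
          InRadicalB n (fun p => σ p - ∑ lam : Nat.Partition n, c lam * ((χ lam) p.1 : ℚ))) := by
  refine ⟨fun lam mu => ?_, fun lam mu => ?_, fun σ hσ => spanB n χ hχ σ hσ⟩
  · exact ell_pull n (fun w => (χ lam w : ℚ)) (fun w => (χ mu w : ℚ))
  · exact (ell_pull n (fun w => (χ lam w : ℚ)) (fun w => (χ mu w : ℚ))).trans (orth n χ hχ lam mu)
end
end
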